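/- arXiv:2105.13660 — 3 statements merged into one kernel-verified Lean document; each statement's English description precedes it below -/
import Mathlib

section
/- Let V be a finite-dimensional ℚ-vector space of dimension r. Then the kernel R(V) of the map m : V ⊗ Λ²(P²V) → P³V ⊗ P²V has dimension 6·(r+2 choose 5). -/
/-!
Common constructions: for a `ℚ`-vector space `V`, the symmetric powers
`P²V, P³V, P⁴V, P⁵V` (as `SqM V`, `CubM V`, `QuarM V`, `QuinM V`), built as iterated
quotients of tensor products, with the multiplication maps between them; the exterior
square `Λ²W` (as `AltM W`) with the wedge map; and the 5-linear map `⋆` (as `star5`).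
-/

open TensorProduct

noncomputable section

variable (V W : Type) [AddCommGroup V] [Module ℚ V] [AddCommGroup W] [Module ℚ W]

/-- The relations defining the symmetric square `P²V` as a quotient of `V ⊗ V`. -/
def sqRel : Submodule ℚ (V ⊗[ℚ] V) :=
  Submodule.span ℚ {z | ∃ x y : V, z = x ⊗ₜ[ℚ] y - y ⊗ₜ[ℚ] x}

/-- The symmetric square `P²V`. -/
abbrev SqM : Type := (V ⊗[ℚ] V) ⧸ sqRel V

/-- The product `V × V → P²V`, `(x, y) ↦ xy`. -/
def sqm : V →ₗ[ℚ] V →ₗ[ℚ] SqM V :=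
  (TensorProduct.mk ℚ V V).compr₂ (sqRel V).mkQ

/-- The relations presenting the symmetric cube `P³V` as a quotient of `V ⊗ P²V`. -/
def cubRel : Submodule ℚ (V ⊗[ℚ] SqM V) :=
  Submodule.span ℚ {z | ∃ x y w : V, z = x ⊗ₜ[ℚ] sqm V y w - y ⊗ₜ[ℚ] sqm V x w}

/-- The symmetric cube `P³V`. -/
abbrev CubM : Type := (V ⊗[ℚ] SqM V) ⧸ cubRel V

/-- The product `V × P²V → P³V`. -/
def mulC : V →ₗ[ℚ] SqM V →ₗ[ℚ] CubM V :=
  (TensorProduct.mk ℚ V (SqM V)).compr₂ (cubRel V).mkQ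

/-- The relations presenting `P⁴V` as a quotient of `V ⊗ P³V`. -/
def quarRel : Submodule ℚ (V ⊗[ℚ] CubM V) :=
  Submodule.span ℚ {z | ∃ (x y : V) (u : SqM V), z = x ⊗ₜ[ℚ] mulC V y u - y ⊗ₜ[ℚ] mulC V x u}

/-- The symmetric fourth power `P⁴V`. -/
abbrev QuarM : Type := (V ⊗[ℚ] CubM V) ⧸ quarRel V

/-- The product `V × P³V → P⁴V`. -/
def mulQ : V →ₗ[ℚ] CubM V →ₗ[ℚ] QuarM V :=
  (TensorProduct.mk ℚ V (CubM V)).compr₂ (quarRel V).mkQ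

/-- The relations presenting `P⁵V` as a quotient of `V ⊗ P⁴V`. -/
def quinRel : Submodule ℚ (V ⊗[ℚ] QuarM V) :=
  Submodule.span ℚ {z | ∃ (x y : V) (c : CubM V), z = x ⊗ₜ[ℚ] mulQ V y c - y ⊗ₜ[ℚ] mulQ V x c}

/-- The symmetric fifth power `P⁵V`. -/
abbrev QuinM : Type := (V ⊗[ℚ] QuarM V) ⧸ quinRel V

/-- The product `V × P⁴V → P⁵V`. -/
def mulQn : V →ₗ[ℚ] QuarM V →ₗ[ℚ] QuinM V :=
  (TensorProduct.mk ℚ V (QuarM V)).compr₂ (quinRel V).mkQ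

/-- The relations defining the exterior square `Λ²W` as a quotient of `W ⊗ W`. -/
def altRel2 : Submodule ℚ (W ⊗[ℚ] W) :=
  Submodule.span ℚ {z | ∃ x : W, z = x ⊗ₜ[ℚ] x}

/-- The exterior square `Λ²W`. -/
abbrev AltM : Type := (W ⊗[ℚ] W) ⧸ altRel2 W

/-- The wedge product `W × W → Λ²W`. -/
def wdg : W →ₗ[ℚ] W →ₗ[ℚ] AltM W :=
  (TensorProduct.mk ℚ W W).compr₂ (altRel2 W).mkQ

/-- The element `⋆(x₁,…,x₅) = Σ_{i ∈ ℤ/5} xᵢ ⊗ (x_{i+1}x_{i+2} ∧ x_{i+3}x_{i+4})`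
of `V ⊗ Λ²(P²V)`. -/
def star5 (x₁ x₂ x₃ x₄ x₅ : V) : V ⊗[ℚ] AltM (SqM V) :=
    x₁ ⊗ₜ[ℚ] wdg (SqM V) (sqm V x₂ x₃) (sqm V x₄ x₅)
  + x₂ ⊗ₜ[ℚ] wdg (SqM V) (sqm V x₃ x₄) (sqm V x₅ x₁)
  + x₃ ⊗ₜ[ℚ] wdg (SqM V) (sqm V x₄ x₅) (sqm V x₁ x₂)
  + x₄ ⊗ₜ[ℚ] wdg (SqM V) (sqm V x₅ x₁) (sqm V x₂ x₃)
  + x₅ ⊗ₜ[ℚ] wdg (SqM V) (sqm V x₁ x₂) (sqm V x₃ x₄)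

/-!
The cokernel of `m` is `P⁵V`. Indeed, modulo the relations `qu ⊗ v = qv ⊗ u` the element
`xyz ⊗ uv` of `P³V ⊗ P²V` is symmetric in all five factors, because exchanging `yz` with `uv`
and permuting `x, y, z` generate, together, every permutation; and evaluation in a polynomial
ring shows that nothing more is identified. The kernel of `m` then has dimension
`dim (V ⊗ Λ²(P²V)) - dim (P³V ⊗ P²V) + dim P⁵V`.
-/

section MonomialCount

open MvPolynomial

lemma exists_perm_of_map_univ_eq {κ ι : Type*} [Fintype κ] {f g : κ → ι}
    (h : Finset.univ.val.map f = Finset.univ.val.map g) : ∃ σ : Equiv.Perm κ, g ∘ σ = f := by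
  classical
  have fiberEquiv (c : ι) : Nonempty ({a // f a = c} ≃ {a // g a = c}) := by
    rw [← Fintype.card_eq, Fintype.card_subtype, Fintype.card_subtype]
    simpa [Multiset.count_map, Finset.card_def, eq_comm] using congrArg (Multiset.count c) h
  exact ⟨Equiv.ofFiberEquiv fun c ↦ (fiberEquiv c).some, funext (Equiv.ofFiberEquiv_map _)⟩

lemma exists_map_univ_eq_coe_sym {ι : Type*} {n : ℕ} (s : Sym ι n) :
    ∃ f : Fin n → ι, Finset.univ.val.map f = (s : Multiset ι) := by
  obtain ⟨⟨l⟩, rfl⟩ := s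
  exact ⟨l.get, (Fin.univ_val_map l.get).trans (congrArg _ (List.ofFn_get l))⟩

lemma prod_X_eq_monomial {R κ ι : Type*} [CommSemiring R] [Fintype κ] [DecidableEq ι] (f : κ → ι) :
    ∏ i, (X (f i) : MvPolynomial ι R) =
      monomial (Multiset.toFinsupp (Finset.univ.val.map f)) 1 := by
  simp only [X, ← monomial_sum_one, ← Multiset.toFinsupp_singleton, ← map_sum]
  rw [Finset.sum_eq_multiset_sum, ← Multiset.sum_map_singleton (Finset.univ.val.map f),
    Multiset.map_map, Function.comp_def]

lemma comp_perm_eq_of_comp_adjacent_swap_eq {α β : Type*} {n : ℕ} {G : (Fin (n + 1) → α) → β}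
    (hG : ∀ (i : Fin n) (f : Fin (n + 1) → α), G (f ∘ Equiv.swap i.castSucc i.succ) = G f)
    (σ : Equiv.Perm (Fin (n + 1))) (f : Fin (n + 1) → α) : G (f ∘ σ) = G f := by
  have hσ : σ ∈ Submonoid.closure
      (Set.range fun i : Fin n ↦ Equiv.swap i.castSucc i.succ) :=
    Equiv.Perm.mclosure_swap_castSucc_succ n ▸ Submonoid.mem_top σ
  induction hσ using Submonoid.closure_induction generalizing f with
  | mem _ h => obtain ⟨i, rfl⟩ := h; exact hG i f
  | one => rfl
  | mul σ τ _ _ hσ hτ => exact (hτ (f ∘ σ)).trans (hσ f)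

theorem finrank_eq_multichoose {R ι M : Type*} [CommRing R] [Nontrivial R] [Fintype ι]
    [AddCommGroup M] [Module R M] {n : ℕ} {G : (Fin n → ι) → M}
    (hspan : Submodule.span R (Set.range G) = ⊤)
    (hperm : ∀ (σ : Equiv.Perm (Fin n)) (f : Fin n → ι), G (f ∘ σ) = G f)
    (φ : M →ₗ[R] MvPolynomial ι R) (hφ : ∀ f, φ (G f) = ∏ i, X (f i)) :
    Module.finrank R M = (Fintype.card ι).multichoose n := by
  classical
  choose F hF using exists_map_univ_eq_coe_sym (ι := ι) (n := n)
  have linearIndependent : LinearIndependent R (G ∘ F) := by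
    refine .of_comp φ ?_
    have : φ ∘ G ∘ F = basisMonomials ι R ∘
        fun s : Sym ι n ↦ Multiset.toFinsupp (s : Multiset ι) := by
      funext s
      simp only [Function.comp_apply, hφ, prod_X_eq_monomial, hF, coe_basisMonomials]
    rw [this]
    exact (basisMonomials ι R).linearIndependent.comp _
      (Multiset.toFinsupp.injective.comp Sym.coe_injective)
  have range_subset : Set.range G ⊆ Set.range (G ∘ F) := by
    rintro _ ⟨f, rfl⟩
    let s : Sym ι n := ⟨Finset.univ.val.map f, by simp⟩
    obtain ⟨σ, hσ⟩ := exists_perm_of_map_univ_eq (hF s)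
    exact ⟨s, by rw [Function.comp_apply, ← hσ, hperm]⟩
  rw [Module.finrank_eq_card_basis
    (.mk linearIndependent (hspan.ge.trans (Submodule.span_mono range_subset))),
    Sym.card_sym_eq_multichoose]

end MonomialCount

lemma span_image2_tmul_eq_top {R M N P : Type*} [CommSemiring R]
    [AddCommMonoid M] [AddCommMonoid N] [AddCommMonoid P] [Module R M] [Module R N] [Module R P]
    {q : M ⊗[R] N →ₗ[R] P} (hq : Function.Surjective q) {s : Set M} {t : Set N}
    (hs : Submodule.span R s = ⊤) (ht : Submodule.span R t = ⊤) :
    Submodule.span R (Set.image2 (fun x y ↦ q (x ⊗ₜ[R] y)) s t) = ⊤ := by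
  change Submodule.span R (Set.image2 (fun x y ↦ (TensorProduct.mk R M N).compr₂ q x y) s t) = ⊤
  rw [← Submodule.map₂_span_span R ((TensorProduct.mk R M N).compr₂ q) s t, hs, ht,
    ← Submodule.map_map₂, TensorProduct.map₂_mk_top_top_eq_top, Submodule.map_top,
    LinearMap.range_eq_top.2 hq]

section SymmetricPowers

variable {V}

lemma sqm_comm (x y : V) : sqm V x y = sqm V y x :=
  (Submodule.Quotient.eq _).2 (Submodule.subset_span ⟨x, y, rfl⟩)

lemma mulC_sqm_left_comm (x y z : V) : mulC V x (sqm V y z) = mulC V y (sqm V x z) :=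
  (Submodule.Quotient.eq _).2 (Submodule.subset_span ⟨x, y, z, rfl⟩)

lemma span_image2_sqm_eq_top {s t : Set V} (hs : Submodule.span ℚ s = ⊤)
    (ht : Submodule.span ℚ t = ⊤) :
    Submodule.span ℚ (Set.image2 (fun x y ↦ sqm V x y) s t) = ⊤ :=
  span_image2_tmul_eq_top (Submodule.mkQ_surjective (sqRel V)) hs ht

lemma span_image2_mulC_eq_top {s : Set V} {t : Set (SqM V)} (hs : Submodule.span ℚ s = ⊤)
    (ht : Submodule.span ℚ t = ⊤) :
    Submodule.span ℚ (Set.image2 (fun x u ↦ mulC V x u) s t) = ⊤ :=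
  span_image2_tmul_eq_top (Submodule.mkQ_surjective (cubRel V)) hs ht

variable {A : Type*} [CommRing A] [Algebra ℚ A]

/-- The degree-two part `xy ↦ f x * f y` of the algebra map out of the symmetric algebra of `V`
that extends `f`. -/
def SqM.liftAlg (f : V →ₗ[ℚ] A) : SqM V →ₗ[ℚ] A :=
  (sqRel V).liftQ (LinearMap.mul' ℚ A ∘ₗ TensorProduct.map f f) <| by
    rw [sqRel, Submodule.span_le]
    rintro _ ⟨x, y, rfl⟩
    simp [mul_comm]

lemma SqM.liftAlg_sqm (f : V →ₗ[ℚ] A) (x y : V) : liftAlg f (sqm V x y) = f x * f y := rfl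

/-- The degree-three part `xyz ↦ f x * f y * f z` of the algebra map out of the symmetric algebra
of `V` that extends `f`. -/
def CubM.liftAlg (f : V →ₗ[ℚ] A) : CubM V →ₗ[ℚ] A :=
  (cubRel V).liftQ (LinearMap.mul' ℚ A ∘ₗ TensorProduct.map f (SqM.liftAlg f)) <| by
    rw [cubRel, Submodule.span_le]
    rintro _ ⟨x, y, z, rfl⟩
    simp [SqM.liftAlg_sqm, mul_left_comm]

lemma CubM.liftAlg_mulC (f : V →ₗ[ℚ] A) (x : V) (u : SqM V) :
    liftAlg f (mulC V x u) = f x * SqM.liftAlg f u := rfl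

variable (V)

theorem finrank_sqM [FiniteDimensional ℚ V] :
    Module.finrank ℚ (SqM V) = (Module.finrank ℚ V).multichoose 2 := by
  let b := Module.finBasis ℚ V
  let G (f : Fin 2 → Fin (Module.finrank ℚ V)) : SqM V := sqm V (b (f 0)) (b (f 1))
  have span_eq_top : Submodule.span ℚ (Set.range G) = ⊤ := by
    refine top_le_iff.1 ((span_image2_sqm_eq_top b.span_eq b.span_eq).ge.trans
      (Submodule.span_mono ?_))
    rintro _ ⟨_, ⟨i, rfl⟩, _, ⟨j, rfl⟩, rfl⟩
    exact ⟨![i, j], rfl⟩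
  have perm_eq := comp_perm_eq_of_comp_adjacent_swap_eq (G := G) fun i f ↦ by
    fin_cases i
    exact sqm_comm (b (f 1)) (b (f 0))
  rw [finrank_eq_multichoose span_eq_top perm_eq (SqM.liftAlg (b.constr ℚ MvPolynomial.X)) ?_,
    Fintype.card_fin]
  simp [G, SqM.liftAlg_sqm, Fin.prod_univ_two]

theorem finrank_cubM [FiniteDimensional ℚ V] :
    Module.finrank ℚ (CubM V) = (Module.finrank ℚ V).multichoose 3 := by
  let b := Module.finBasis ℚ V
  let G (f : Fin 3 → Fin (Module.finrank ℚ V)) : CubM V :=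
    mulC V (b (f 0)) (sqm V (b (f 1)) (b (f 2)))
  have span_eq_top : Submodule.span ℚ (Set.range G) = ⊤ := by
    refine top_le_iff.1 ((span_image2_mulC_eq_top b.span_eq
      (span_image2_sqm_eq_top b.span_eq b.span_eq)).ge.trans (Submodule.span_mono ?_))
    rintro _ ⟨_, ⟨i, rfl⟩, _, ⟨_, ⟨j, rfl⟩, _, ⟨k, rfl⟩, rfl⟩, rfl⟩
    exact ⟨![i, j, k], rfl⟩
  have perm_eq := comp_perm_eq_of_comp_adjacent_swap_eq (G := G) fun i f ↦ by
    fin_cases i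
    · exact mulC_sqm_left_comm (b (f 1)) (b (f 0)) (b (f 2))
    · exact congrArg (mulC V (b (f 0))) (sqm_comm (b (f 2)) (b (f 1)))
  rw [finrank_eq_multichoose span_eq_top perm_eq (CubM.liftAlg (b.constr ℚ MvPolynomial.X)) ?_,
    Fintype.card_fin]
  simp [G, CubM.liftAlg_mulC, SqM.liftAlg_sqm, Fin.prod_univ_three, mul_assoc]

end SymmetricPowers

section ExteriorSquare

lemma span_image2_wdg_eq_top {s t : Set W} (hs : Submodule.span ℚ s = ⊤)
    (ht : Submodule.span ℚ t = ⊤) :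
    Submodule.span ℚ (Set.image2 (fun x y ↦ wdg W x y) s t) = ⊤ :=
  span_image2_tmul_eq_top (Submodule.mkQ_surjective (altRel2 W)) hs ht

lemma comm_eq_self_of_mem_altRel2 {z : W ⊗[ℚ] W} (hz : z ∈ altRel2 W) :
    TensorProduct.comm ℚ W W z = z := by
  induction hz using Submodule.span_induction with
  | mem _ h => obtain ⟨x, rfl⟩ := h; simp
  | zero => simp
  | add _ _ _ _ hx hy => simp [hx, hy]
  | smul _ _ _ hx => simp [hx]

lemma comm_eq_neg_of_mem_sqRel {z : W ⊗[ℚ] W} (hz : z ∈ sqRel W) :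
    TensorProduct.comm ℚ W W z = -z := by
  induction hz using Submodule.span_induction with
  | mem _ h => obtain ⟨x, y, rfl⟩ := h; simp
  | zero => simp
  | add _ _ _ _ hx hy => simp [hx, hy, add_comm]
  | smul _ _ _ hx => simp [hx]

theorem isCompl_altRel2_sqRel : IsCompl (altRel2 W) (sqRel W) := by
  have : IsAddTorsionFree (W ⊗[ℚ] W) := .of_module_rat _
  constructor
  · refine Submodule.disjoint_def.2 fun z hz hz' ↦ self_eq_neg.1 ?_
    exact (comm_eq_self_of_mem_altRel2 W hz).symm.trans (comm_eq_neg_of_mem_sqRel W hz')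
  · rw [codisjoint_iff_le_sup, ← TensorProduct.span_tmul_eq_top, Submodule.span_le]
    rintro _ ⟨x, y, rfl⟩
    have polarization : x ⊗ₜ[ℚ] y =
        (1 / 2 : ℚ) • ((x + y) ⊗ₜ[ℚ] (x + y) - x ⊗ₜ[ℚ] x - y ⊗ₜ[ℚ] y) +
          (1 / 2 : ℚ) • (x ⊗ₜ[ℚ] y - y ⊗ₜ[ℚ] x) := by
      simp only [TensorProduct.add_tmul, TensorProduct.tmul_add]
      module
    have tmul_self_mem (w : W) : w ⊗ₜ[ℚ] w ∈ altRel2 W := Submodule.subset_span ⟨w, rfl⟩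
    rw [polarization]
    exact Submodule.add_mem_sup
      (Submodule.smul_mem _ _ (sub_mem (sub_mem (tmul_self_mem _) (tmul_self_mem x))
        (tmul_self_mem y)))
      (Submodule.smul_mem _ _ (Submodule.subset_span ⟨x, y, rfl⟩))

theorem finrank_altM [FiniteDimensional ℚ W] :
    Module.finrank ℚ (AltM W) = (Module.finrank ℚ W).choose 2 := by
  have finrank_altM_eq : Module.finrank ℚ (AltM W) = Module.finrank ℚ (sqRel W) :=
    (Submodule.quotientEquivOfIsCompl _ _ (isCompl_altRel2_sqRel W)).finrank_eq
  have finrank_add := Submodule.finrank_quotient_add_finrank (sqRel W)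
  rw [finrank_sqM, Module.finrank_tensorProduct, ← finrank_altM_eq, Nat.multichoose_eq]
    at finrank_add
  qify at finrank_add ⊢
  simp only [Nat.add_succ_sub_one, Nat.cast_choose_two, Nat.cast_add, Nat.cast_one]
    at finrank_add ⊢
  linarith

end ExteriorSquare

section Cokernel

/-- The relations `qu ⊗ v = qv ⊗ u` on `P³V ⊗ P²V`; they span the range of `m`. -/
def exchangeRel : Submodule ℚ (CubM V ⊗[ℚ] SqM V) :=
  Submodule.span ℚ {z | ∃ (q : V) (u v : SqM V),
    z = mulC V q u ⊗ₜ[ℚ] v - mulC V q v ⊗ₜ[ℚ] u}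

/-- The cokernel of `m`, which is a model of `P⁵V`. -/
abbrev ExchangeM : Type := (CubM V ⊗[ℚ] SqM V) ⧸ exchangeRel V

variable {V}

/-- The class of `xyz ⊗ uv` in the cokernel of `m`, which plays the role of the product `xyzuv`
in `P⁵V`. -/
def exchangeProd (x y z u v : V) : ExchangeM V :=
  (exchangeRel V).mkQ (mulC V x (sqm V y z) ⊗ₜ[ℚ] sqm V u v)

lemma exchangeProd_swap₁₂ (x y z u v : V) : exchangeProd x y z u v = exchangeProd y x z u v := by
  simp only [exchangeProd, mulC_sqm_left_comm x y z]

lemma exchangeProd_swap₂₃ (x y z u v : V) : exchangeProd x y z u v = exchangeProd x z y u v := by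
  simp only [exchangeProd, sqm_comm y z]

lemma exchangeProd_swap₄₅ (x y z u v : V) : exchangeProd x y z u v = exchangeProd x y z v u := by
  simp only [exchangeProd, sqm_comm u v]

lemma exchangeProd_exchange (x y z u v : V) : exchangeProd x y z u v = exchangeProd x u v y z :=
  (Submodule.Quotient.eq _).2 (Submodule.subset_span ⟨x, sqm V y z, sqm V u v, rfl⟩)

lemma exchangeProd_swap₃₄ (x y z u v : V) : exchangeProd x y z u v = exchangeProd x y u z v :=
  calc
    exchangeProd x y z u v = exchangeProd z x y u v := by
      rw [exchangeProd_swap₂₃, exchangeProd_swap₁₂]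
    _ = exchangeProd u z v x y := by rw [exchangeProd_exchange, exchangeProd_swap₁₂]
    _ = exchangeProd u x y z v := exchangeProd_exchange ..
    _ = exchangeProd x y u z v := by rw [exchangeProd_swap₁₂, exchangeProd_swap₂₃]

variable {A : Type*} [CommRing A] [Algebra ℚ A]

/-- The degree-five part of the algebra map out of the symmetric algebra of `V` that extends `f`,
on the cokernel of `m` as a model of `P⁵V`. -/
def ExchangeM.liftAlg (f : V →ₗ[ℚ] A) : ExchangeM V →ₗ[ℚ] A :=
  (exchangeRel V).liftQ
      (LinearMap.mul' ℚ A ∘ₗ TensorProduct.map (CubM.liftAlg f) (SqM.liftAlg f)) <| by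
    rw [exchangeRel, Submodule.span_le]
    rintro _ ⟨q, u, v, rfl⟩
    simp [CubM.liftAlg_mulC, mul_right_comm]

lemma ExchangeM.liftAlg_exchangeProd (f : V →ₗ[ℚ] A) (x y z u v : V) :
    liftAlg f (exchangeProd x y z u v) = f x * (f y * f z) * (f u * f v) := rfl

variable (V) in
theorem finrank_exchangeM [FiniteDimensional ℚ V] :
    Module.finrank ℚ (ExchangeM V) = (Module.finrank ℚ V).multichoose 5 := by
  let b := Module.finBasis ℚ V
  let G (f : Fin 5 → Fin (Module.finrank ℚ V)) : ExchangeM V :=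
    exchangeProd (b (f 0)) (b (f 1)) (b (f 2)) (b (f 3)) (b (f 4))
  have span_eq_top : Submodule.span ℚ (Set.range G) = ⊤ := by
    have span_sqm := span_image2_sqm_eq_top b.span_eq b.span_eq
    have span_mulC := span_image2_mulC_eq_top b.span_eq span_sqm
    refine top_le_iff.1 ((span_image2_tmul_eq_top (Submodule.mkQ_surjective (exchangeRel V))
      span_mulC span_sqm).ge.trans (Submodule.span_mono ?_))
    rintro _ ⟨_, ⟨_, ⟨i, rfl⟩, _, ⟨_, ⟨j, rfl⟩, _, ⟨k, rfl⟩, rfl⟩, rfl⟩, _,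
      ⟨_, ⟨p, rfl⟩, _, ⟨q, rfl⟩, rfl⟩, rfl⟩
    exact ⟨![i, j, k, p, q], rfl⟩
  have perm_eq := comp_perm_eq_of_comp_adjacent_swap_eq (G := G) fun i f ↦ by
    fin_cases i
    · exact exchangeProd_swap₁₂ (b (f 1)) (b (f 0)) (b (f 2)) (b (f 3)) (b (f 4))
    · exact exchangeProd_swap₂₃ (b (f 0)) (b (f 2)) (b (f 1)) (b (f 3)) (b (f 4))
    · exact exchangeProd_swap₃₄ (b (f 0)) (b (f 1)) (b (f 3)) (b (f 2)) (b (f 4))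
    · exact exchangeProd_swap₄₅ (b (f 0)) (b (f 1)) (b (f 2)) (b (f 4)) (b (f 3))
  rw [finrank_eq_multichoose span_eq_top perm_eq
    (ExchangeM.liftAlg (b.constr ℚ MvPolynomial.X)) ?_, Fintype.card_fin]
  simp [G, ExchangeM.liftAlg_exchangeProd, Fin.prod_univ_five, mul_assoc]

lemma range_eq_exchangeRel {m : (V ⊗[ℚ] AltM (SqM V)) →ₗ[ℚ] (CubM V ⊗[ℚ] SqM V)}
    (hm : ∀ (q : V) (u v : SqM V),
      m (q ⊗ₜ[ℚ] wdg (SqM V) u v) = mulC V q u ⊗ₜ[ℚ] v - mulC V q v ⊗ₜ[ℚ] u) :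
    LinearMap.range m = exchangeRel V := by
  have span_tmul_wdg := span_image2_tmul_eq_top (q := LinearMap.id (R := ℚ))
    Function.surjective_id (Submodule.span_univ (M := V))
    (span_image2_wdg_eq_top (SqM V) Submodule.span_univ Submodule.span_univ)
  rw [LinearMap.range_eq_map, ← span_tmul_wdg, Submodule.map_span, exchangeRel]
  congr 1
  ext z
  constructor
  · rintro ⟨_, ⟨q, -, _, ⟨u, -, v, -, rfl⟩, rfl⟩, rfl⟩
    exact ⟨q, u, v, hm q u v⟩
  · rintro ⟨q, u, v, rfl⟩
    exact ⟨_, ⟨q, trivial, _, ⟨u, trivial, v, trivial, rfl⟩, rfl⟩, hm q u v⟩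

end Cokernel

lemma mul_choose_multichoose_two_add_multichoose_five (r : ℕ) :
    r * (r.multichoose 2).choose 2 + r.multichoose 5 =
      r.multichoose 3 * r.multichoose 2 + 6 * (r + 2).choose 5 := by
  simp only [Nat.multichoose_eq]
  qify
  simp only [Nat.add_one_sub_one, Nat.cast_choose_eq_descPochhammer_div, Nat.cast_add, Nat.cast_one,
    descPochhammer_succ_eval, descPochhammer_one, Polynomial.eval_X, add_sub_cancel_right,
    Nat.factorial, Nat.succ_eq_add_one, Nat.reduceAdd, zero_add, mul_one, Nat.cast_ofNat,
    Nat.reduceMul]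
  ring

/-- **Lemma 2.1(i).** If `V` is a `ℚ`-vector space of dimension `r`, then the kernel `R(V)`
of the map `m : V ⊗ Λ²(P²V) → P³V ⊗ P²V`, `m(q ⊗ (u ∧ v)) = qu ⊗ v − qv ⊗ u`, has
dimension `6 * (r + 2).choose 5`. -/
theorem finrank_ker_m [FiniteDimensional ℚ V] (r : ℕ) (hr : Module.finrank ℚ V = r)
    (m : (V ⊗[ℚ] AltM (SqM V)) →ₗ[ℚ] (CubM V ⊗[ℚ] SqM V))
    (hm : ∀ (q : V) (u v : SqM V),
      m (q ⊗ₜ[ℚ] wdg (SqM V) u v) = mulC V q u ⊗ₜ[ℚ] v - mulC V q v ⊗ₜ[ℚ] u) :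
    Module.finrank ℚ (LinearMap.ker m) = 6 * Nat.choose (r + 2) 5 := by
  have range_add_ker := LinearMap.finrank_range_add_finrank_ker m
  have coker_add_range := Submodule.finrank_quotient_add_finrank (exchangeRel V)
  rw [range_eq_exchangeRel hm, Module.finrank_tensorProduct, finrank_altM, finrank_sqM, hr]
    at range_add_ker
  rw [finrank_exchangeM, Module.finrank_tensorProduct, finrank_cubM, finrank_sqM, hr]
    at coker_add_range
  linarith [mul_choose_multichoose_two_add_multichoose_five r]

end
end

section
/- Let V = ℚ³ with basis x, y, z, and let μ : P²V → ℚ be the linear map with μ(x²) = μ(y²) = μ(z²) = 1 and μ(xy) = μ(yz) = μ(zx) = 0. Let E = ker μ ⊆ P²V and let D = (V ⊗ Λ²E) ∩ R(V) ⊆ V ⊗ Λ²(P²V). Then D is one-dimensional, spanned by the nonzero element Σ_cyc x ⊗ (yz ∧ (y² − z²) − xy ∧ xz), where the sum is over the three cyclic permutations of (x, y, z). -/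
/-!
Common constructions: for a `ℚ`-vector space `V`, the symmetric powers
`P²V, P³V, P⁴V, P⁵V` (as `SqM V`, `CubM V`, `QuarM V`, `QuinM V`), built as iterated
quotients of tensor products, with the multiplication maps between them; the exterior
square `Λ²W` (as `AltM W`) with the wedge map; and the 5-linear map `⋆` (as `star5`).
-/

open TensorProduct

noncomputable section

variable (V W : Type) [AddCommGroup V] [Module ℚ V] [AddCommGroup W] [Module ℚ W]

/-!
An element `w` of `V ⊗ Λ²(P²V)` is determined by its coefficients `P a i j k l` along
`bₐ ⊗ (bᵢbⱼ ∧ bₖbₗ)`. Besides the evident symmetries, `w ∈ V ⊗ Λ²E` gives `∑ i, P a i i k l = 0` and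
`w ∈ R(V)` makes the cyclic sum over `a, i, j` vanish. The cyclic relation expresses `P a a j k l`
through the diagonal coefficient `P j a a k l`, and the trace relation leaves one diagonal
coefficient for each `j, k, l`. Playing both against the antisymmetry under `(i, j) ↔ (k, l)` shows
that all coefficients are determined by the `P a i i k l` with `a, k, l` distinct, and one more
cyclic relation identifies the three values that remain. So `D` is at most a line, and the cyclic
element spans it.
-/

open Module (Dual Basis)

theorem eq_span_singleton_of_dual {K M : Type*} [Field K] [AddCommGroup M] [Module K M]
    {L : Submodule K M} {φ : Dual K M} {g : M} (hφ : ∀ w ∈ L, φ w = 0 → w = 0) (hg : g ∈ L)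
    (hφg : φ g ≠ 0) : L = Submodule.span K {g} := by
  refine le_antisymm (fun w hw => ?_) ((Submodule.span_singleton_le_iff_mem _ _).2 hg)
  have hdiff : w - (φ w / φ g) • g = 0 :=
    hφ _ (L.sub_mem hw (L.smul_mem _ hg)) (by simp [hφg])
  exact Submodule.mem_span_singleton.2 ⟨φ w / φ g, (sub_eq_zero.1 hdiff).symm⟩

variable {V W} {M : Type*} [AddCommGroup M] [Module ℚ M]

section Products

theorem sqm_comm_s5 (u v : V) : sqm V u v = sqm V v u :=
  (Submodule.Quotient.eq _).2 <| Submodule.subset_span ⟨u, v, rfl⟩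

theorem mulC_sqm_left_comm_s5 (u v w : V) : mulC V u (sqm V v w) = mulC V v (sqm V u w) :=
  (Submodule.Quotient.eq _).2 <| Submodule.subset_span ⟨u, v, w, rfl⟩

theorem wdg_self (u : W) : wdg W u u = 0 :=
  (Submodule.Quotient.mk_eq_zero _).2 <| Submodule.subset_span ⟨u, rfl⟩

theorem neg_wdg (u v : W) : -wdg W u v = wdg W v u := by
  have h : wdg W (u + v) (u + v) = 0 := wdg_self _
  simp only [map_add, LinearMap.add_apply, wdg_self, zero_add, add_zero] at h
  exact neg_eq_of_add_eq_zero_left h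

theorem sqM_hom_ext {φ ψ : SqM V →ₗ[ℚ] M} (h : ∀ u v, φ (sqm V u v) = ψ (sqm V u v)) : φ = ψ :=
  Submodule.linearMap_qext _ <| TensorProduct.ext' h

theorem altM_hom_ext {φ ψ : AltM W →ₗ[ℚ] M} (h : ∀ u v, φ (wdg W u v) = ψ (wdg W u v)) : φ = ψ :=
  Submodule.linearMap_qext _ <| TensorProduct.ext' h

theorem tensor_altM_hom_ext {φ ψ : V ⊗[ℚ] AltM W →ₗ[ℚ] M}
    (h : ∀ q u v, φ (q ⊗ₜ wdg W u v) = ψ (q ⊗ₜ wdg W u v)) : φ = ψ :=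
  TensorProduct.ext <| LinearMap.ext fun q => altM_hom_ext (h q)

end Products

section Forms

/-- The polarised product of two linear forms, as a linear form on the symmetric square:
`uv ↦ f(u)g(v) + g(u)f(v)`. -/
def sqForm (f g : Dual ℚ V) : Dual ℚ (SqM V) :=
  (sqRel V).liftQ (dualDistrib ℚ V V (f ⊗ₜ g + g ⊗ₜ f)) <| by
    refine Submodule.span_le.2 ?_
    rintro _ ⟨u, v, rfl⟩
    simp only [SetLike.mem_coe, LinearMap.mem_ker, map_add, map_sub, LinearMap.add_apply,
      dualDistrib_apply]
    ring

theorem sqForm_sqm (f g : Dual ℚ V) (u v : V) : sqForm f g (sqm V u v) = f u * g v + g u * f v := by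
  simp [sqForm, sqm]

theorem sqForm_comm (f g : Dual ℚ V) : sqForm f g = sqForm g f :=
  sqM_hom_ext fun u v => by simp only [sqForm_sqm, add_comm]

/-- The polarised product of three linear forms, as a linear form on the symmetric cube. -/
def cubForm (f g h : Dual ℚ V) : Dual ℚ (CubM V) :=
  (cubRel V).liftQ
      (dualDistrib ℚ V (SqM V) (f ⊗ₜ sqForm g h + g ⊗ₜ sqForm h f + h ⊗ₜ sqForm f g)) <| by
    refine Submodule.span_le.2 ?_
    rintro _ ⟨u, v, w, rfl⟩
    simp only [SetLike.mem_coe, LinearMap.mem_ker, map_add, map_sub, LinearMap.add_apply,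
      dualDistrib_apply, sqForm_sqm]
    ring

theorem cubForm_mulC (f g h : Dual ℚ V) (q : V) (u : SqM V) :
    cubForm f g h (mulC V q u) = f q * sqForm g h u + g q * sqForm h f u + h q * sqForm f g u := by
  simp [cubForm, mulC]

/-- The exterior product of two linear forms, as a linear form on the exterior square:
`u ∧ v ↦ f(u)g(v) - g(u)f(v)`. -/
def wdgForm (f g : Dual ℚ W) : Dual ℚ (AltM W) :=
  (altRel2 W).liftQ (dualDistrib ℚ W W (f ⊗ₜ g - g ⊗ₜ f)) <| by
    refine Submodule.span_le.2 ?_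
    rintro _ ⟨u, rfl⟩
    simp only [SetLike.mem_coe, LinearMap.mem_ker, map_sub, LinearMap.sub_apply, dualDistrib_apply]
    ring

theorem wdgForm_wdg (f g : Dual ℚ W) (u v : W) :
    wdgForm f g (wdg W u v) = f u * g v - g u * f v := by
  simp [wdgForm, wdg]

theorem wdgForm_swap (f g : Dual ℚ W) : wdgForm g f = -wdgForm f g :=
  altM_hom_ext fun u v => by simp only [wdgForm_wdg, LinearMap.neg_apply, neg_sub]

end Forms

section DualFrames

variable {ι κ : Type*} [Fintype ι] [Fintype κ]

/-- A finite family of vectors `e` and a family of linear forms `f` that resolve the identity: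
`u = ∑ k, f k u • e k` for all `u`. Neither family has to be independent, so that symmetric and
exterior squares can be indexed by all pairs of indices. -/
def IsDualFrame (e : κ → W) (f : κ → Dual ℚ W) : Prop :=
  ∑ k, (f k).smulRight (e k) = LinearMap.id

theorem isDualFrame_basis (b : Basis ι ℚ V) : IsDualFrame b b.coord :=
  LinearMap.ext fun v => by simp

namespace IsDualFrame

variable {e : κ → W} {f : κ → Dual ℚ W}

theorem sum_smul (h : IsDualFrame e f) (u : W) : ∑ k, f k u • e k = u := by
  simpa using LinearMap.congr_fun h u

theorem eq_zero (h : IsDualFrame e f) {u : W} (hu : ∀ k, f k u = 0) : u = 0 := by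
  simpa [hu] using (h.sum_smul u).symm

theorem sum_smul_bilin {e' : ι → V} {f' : ι → Dual ℚ V} (h' : IsDualFrame e' f')
    (h : IsDualFrame e f) (B : V →ₗ[ℚ] W →ₗ[ℚ] M) (v : V) (u : W) :
    ∑ p : ι × κ, (f' p.1 v * f p.2 u) • B (e' p.1) (e p.2) = B v u := by
  conv_rhs => rw [← h'.sum_smul v, ← h.sum_smul u]
  simp only [map_sum, LinearMap.sum_apply, map_smul, LinearMap.smul_apply, Finset.smul_sum,
    smul_smul, Fintype.sum_prod_type_right, mul_comm]

theorem tmul {e' : ι → V} {f' : ι → Dual ℚ V} (h' : IsDualFrame e' f') (h : IsDualFrame e f) :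
    IsDualFrame (fun p : ι × κ => e' p.1 ⊗ₜ[ℚ] e p.2)
      fun p => dualDistrib ℚ V W (f' p.1 ⊗ₜ f p.2) :=
  TensorProduct.ext' fun v u => by
    simpa using h'.sum_smul_bilin h (TensorProduct.mk ℚ V W) v u

theorem symmSq (h : IsDualFrame e f) :
    IsDualFrame (fun p : κ × κ => (2⁻¹ : ℚ) • sqm W (e p.1) (e p.2))
      fun p => sqForm (f p.1) (f p.2) :=
  sqM_hom_ext fun u v => by
    calc (∑ p : κ × κ, (sqForm (f p.1) (f p.2)).smulRight
            ((2⁻¹ : ℚ) • sqm W (e p.1) (e p.2))) (sqm W u v)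
      _ = (2⁻¹ : ℚ) • (∑ p : κ × κ, (f p.1 u * f p.2 v) • sqm W (e p.1) (e p.2)
            + ∑ p : κ × κ, (f p.1 v * f p.2 u) • sqm W (e p.1) (e p.2)) := by
          rw [← Finset.sum_add_distrib, Finset.smul_sum, LinearMap.sum_apply]
          refine Finset.sum_congr rfl fun p _ => ?_
          rw [LinearMap.smulRight_apply, sqForm_sqm]
          module
      _ = sqm W u v := by
          rw [h.sum_smul_bilin h, h.sum_smul_bilin h, sqm_comm_s5 v u]
          module

theorem extSq (h : IsDualFrame e f) :
    IsDualFrame (fun p : κ × κ => (2⁻¹ : ℚ) • wdg W (e p.1) (e p.2))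
      fun p => wdgForm (f p.1) (f p.2) :=
  altM_hom_ext fun u v => by
    calc (∑ p : κ × κ, (wdgForm (f p.1) (f p.2)).smulRight
            ((2⁻¹ : ℚ) • wdg W (e p.1) (e p.2))) (wdg W u v)
      _ = (2⁻¹ : ℚ) • (∑ p : κ × κ, (f p.1 u * f p.2 v) • wdg W (e p.1) (e p.2)
            - ∑ p : κ × κ, (f p.1 v * f p.2 u) • wdg W (e p.1) (e p.2)) := by
          rw [← Finset.sum_sub_distrib, Finset.smul_sum, LinearMap.sum_apply]
          refine Finset.sum_congr rfl fun p _ => ?_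
          rw [LinearMap.smulRight_apply, wdgForm_wdg]
          module
      _ = wdg W u v := by
          rw [h.sum_smul_bilin h, h.sum_smul_bilin h, ← neg_wdg u v]
          module

end IsDualFrame

theorem two_mul_eq_sum_sqForm [DecidableEq ι] (b : Basis ι ℚ V) {μ : Dual ℚ (SqM V)}
    (hμ : ∀ i j, μ (sqm V (b i) (b j)) = if i = j then 1 else 0) (u : SqM V) :
    2 * μ u = ∑ i, sqForm (b.coord i) (b.coord i) u := by
  conv_lhs => rw [← (isDualFrame_basis b).symmSq.sum_smul u]
  simp [hμ, Fintype.sum_prod_type, Finset.mul_sum, mul_comm]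

end DualFrames

section Relations

/-- The subspace `V ⊗ Λ²E` of `V ⊗ Λ²W`, for a subspace `E` of `W`. -/
def tensorWedge (V : Type) [AddCommGroup V] [Module ℚ V] (E : Submodule ℚ W) :
    Submodule ℚ (V ⊗[ℚ] AltM W) :=
  Submodule.span ℚ {w | ∃ (q : V) (u v : W), u ∈ E ∧ v ∈ E ∧ w = q ⊗ₜ[ℚ] wdg W u v}

theorem tmul_wdg_mem_tensorWedge {E : Submodule ℚ W} (q : V) {u v : W} (hu : u ∈ E) (hv : v ∈ E) :
    q ⊗ₜ[ℚ] wdg W u v ∈ tensorWedge V E :=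
  Submodule.subset_span ⟨q, u, v, hu, hv, rfl⟩

theorem sum_dualDistrib_wdgForm_eq_zero {κ : Type*} [Fintype κ] {E : Submodule ℚ W}
    {f : κ → Dual ℚ W} (hf : ∀ u ∈ E, ∑ k, f k u = 0) (p : Dual ℚ V) (g : Dual ℚ W)
    {w : V ⊗[ℚ] AltM W} (hw : w ∈ tensorWedge V E) :
    ∑ k, dualDistrib ℚ V (AltM W) (p ⊗ₜ wdgForm (f k) g) w = 0 := by
  suffices hker : tensorWedge V E ≤
      LinearMap.ker (∑ k, dualDistrib ℚ V (AltM W) (p ⊗ₜ wdgForm (f k) g)) by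
    simpa using hker hw
  refine Submodule.span_le.2 ?_
  rintro _ ⟨q, u, v, hu, hv, rfl⟩
  simp [dualDistrib_apply, wdgForm_wdg, ← Finset.mul_sum, ← Finset.sum_mul, hf u hu, hf v hv]

/-- The element `Σ_cyc x ⊗ (yz ∧ (y² − z²) − xy ∧ xz)`. -/
def cyclicElement (x y z : V) : V ⊗[ℚ] AltM (SqM V) :=
    x ⊗ₜ[ℚ] (wdg (SqM V) (sqm V y z) (sqm V y y - sqm V z z)
      - wdg (SqM V) (sqm V x y) (sqm V x z))
  + y ⊗ₜ[ℚ] (wdg (SqM V) (sqm V z x) (sqm V z z - sqm V x x)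
      - wdg (SqM V) (sqm V y z) (sqm V y x))
  + z ⊗ₜ[ℚ] (wdg (SqM V) (sqm V x y) (sqm V x x - sqm V y y)
      - wdg (SqM V) (sqm V z x) (sqm V z y))

theorem cyclicElement_mem_tensorWedge {E : Submodule ℚ (SqM V)} {x y z : V}
    (hxy : sqm V x y ∈ E) (hyz : sqm V y z ∈ E) (hzx : sqm V z x ∈ E)
    (hxxyy : sqm V x x - sqm V y y ∈ E) (hyyzz : sqm V y y - sqm V z z ∈ E) :
    cyclicElement x y z ∈ tensorWedge V E := by
  have hzzxx : sqm V z z - sqm V x x ∈ E := by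
    simpa using E.neg_mem (E.add_mem hxxyy hyyzz)
  simp only [cyclicElement, TensorProduct.tmul_sub, sqm_comm_s5 y x, sqm_comm_s5 z y, sqm_comm_s5 x z]
  refine add_mem (add_mem (sub_mem ?_ ?_) (sub_mem ?_ ?_)) (sub_mem ?_ ?_) <;>
    exact tmul_wdg_mem_tensorWedge _ ‹_› ‹_›

/-- `m` is the map `q ⊗ (u ∧ v) ↦ qu ⊗ v - qv ⊗ u`, whose kernel is `R(V)`. It is a hypothesis on a
linear map rather than a construction because these values determine `m`. -/
def IsRelationMap (m : V ⊗[ℚ] AltM (SqM V) →ₗ[ℚ] CubM V ⊗[ℚ] SqM V) : Prop :=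
  ∀ (q : V) (u v : SqM V),
    m (q ⊗ₜ[ℚ] wdg (SqM V) u v) = mulC V q u ⊗ₜ[ℚ] v - mulC V q v ⊗ₜ[ℚ] u

namespace IsRelationMap

variable {m : V ⊗[ℚ] AltM (SqM V) →ₗ[ℚ] CubM V ⊗[ℚ] SqM V}

theorem map_cyclicElement (hm : IsRelationMap m) (x y z : V) : m (cyclicElement x y z) = 0 := by
  simp only [cyclicElement, TensorProduct.tmul_sub, map_add, map_sub, hm _ _ _, sqm_comm_s5 y x,
    sqm_comm_s5 z y, sqm_comm_s5 z x, mulC_sqm_left_comm_s5 y x, mulC_sqm_left_comm_s5 z x,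
    mulC_sqm_left_comm_s5 z y]
  abel

theorem dualDistrib_cubForm_map (hm : IsRelationMap m) (f g h : Dual ℚ V) (φ : Dual ℚ (SqM V))
    (w : V ⊗[ℚ] AltM (SqM V)) :
    dualDistrib ℚ (CubM V) (SqM V) (cubForm f g h ⊗ₜ φ) (m w) =
      dualDistrib ℚ V (AltM (SqM V)) (f ⊗ₜ wdgForm (sqForm g h) φ
        + g ⊗ₜ wdgForm (sqForm h f) φ + h ⊗ₜ wdgForm (sqForm f g) φ) w := by
  rw [← LinearMap.comp_apply _ m]
  congr 1
  refine tensor_altM_hom_ext fun q u v => ?_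
  simp only [LinearMap.comp_apply, hm q u v, map_add, map_sub, LinearMap.add_apply,
    dualDistrib_apply, cubForm_mulC, wdgForm_wdg]
  ring

end IsRelationMap

end Relations

section Coefficients

variable {ι : Type*}

/-- The coefficient along `b a ⊗ ((b i)(b j) ∧ (b k)(b l))` of an element of `V ⊗ Λ²(P²V)`,
normalised so that summing over all `a, i, j, k, l` gives `8` times the element. -/
def coeff (b : Basis ι ℚ V) (a i j k l : ι) : Dual ℚ (V ⊗[ℚ] AltM (SqM V)) :=
  dualDistrib ℚ V (AltM (SqM V)) (b.coord a ⊗ₜ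
    wdgForm (sqForm (b.coord i) (b.coord j)) (sqForm (b.coord k) (b.coord l)))

theorem eq_zero_of_coeff_eq_zero [Finite ι] (b : Basis ι ℚ V) {w : V ⊗[ℚ] AltM (SqM V)}
    (hw : ∀ a i j k l, coeff b a i j k l w = 0) : w = 0 := by
  cases nonempty_fintype ι
  have hb := isDualFrame_basis b
  exact (hb.tmul hb.symmSq.extSq).eq_zero fun ⟨a, (i, j), (k, l)⟩ => hw a i j k l

end Coefficients

section Arrays

theorem fin_three_cases (a i : Fin 3) : i = a ∨ i = a + 1 ∨ i = a + 2 := by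
  decide +revert

theorem fin_three_pair_induction {Q : Fin 3 → Fin 3 → Prop} (hsymm : ∀ i j, Q i j → Q j i)
    (hdiag : ∀ i, Q i i) (a : Fin 3) (hleft : ∀ j, Q a j) (hrest : Q (a + 1) (a + 2))
    (i j : Fin 3) : Q i j := by
  rcases fin_three_cases a i with rfl | rfl | rfl
  · exact hleft j
  · rcases fin_three_cases a j with rfl | rfl | rfl
    exacts [hsymm _ _ (hleft _), hdiag _, hrest]
  · rcases fin_three_cases a j with rfl | rfl | rfl
    exacts [hsymm _ _ (hleft _), hsymm _ _ hrest, hdiag _]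

variable {K ι : Type*} [Field K] [Fintype ι]

/-- The symmetries of the coefficients `P a i j k l` of an element of `(V ⊗ Λ²E) ∩ R(V)`: `trace`
expresses that it lies in `V ⊗ Λ²E`, and `cyclic` that it lies in `R(V)`. -/
structure IsRelationArray (P : ι → ι → ι → ι → ι → K) : Prop where
  symm : ∀ a i j k l, P a i j k l = P a j i k l
  antisymm : ∀ a i j k l, P a k l i j = -P a i j k l
  trace : ∀ a k l, ∑ i, P a i i k l = 0
  cyclic : ∀ a i j k l, P a i j k l + P i j a k l + P j a i k l = 0

namespace IsRelationArray

section AnyDimension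

variable {P : ι → ι → ι → ι → ι → K}

theorem symm_right (h : IsRelationArray P) (a i j k l : ι) : P a i j k l = P a i j l k := by
  linear_combination h.antisymm a k l i j - h.symm a k l i j - h.antisymm a l k i j

theorem self_self_eq_zero [CharZero K] (h : IsRelationArray P) (a k l : ι) :
    P a a a k l = 0 := by
  linear_combination h.cyclic a a a k l / 3

theorem self_left_eq_diag [CharZero K] (h : IsRelationArray P) (a j k l : ι) :
    P a a j k l = -(P j a a k l / 2) := by
  linear_combination h.cyclic a a j k l / 2 + h.symm a a j k l / 2

end AnyDimension

variable [CharZero K] {P : Fin 3 → Fin 3 → Fin 3 → Fin 3 → Fin 3 → K}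

theorem diag_add_two (h : IsRelationArray P) (a k l : Fin 3) :
    P a (a + 2) (a + 2) k l = -P a (a + 1) (a + 1) k l := by
  have hshift : ∑ i, P a (a + i) (a + i) k l = 0 :=
    (Equiv.sum_comp (Equiv.addLeft a) fun i => P a i i k l).trans (h.trace a k l)
  rw [Fin.sum_univ_three, add_zero, h.self_self_eq_zero] at hshift
  linear_combination hshift

theorem diag_eq_zero_of_add_one (h : IsRelationArray P) {a k l : Fin 3}
    (hkl : P a (a + 1) (a + 1) k l = 0) (i : Fin 3) : P a i i k l = 0 := by
  rcases fin_three_cases a i with rfl | rfl | rfl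
  · exact h.self_self_eq_zero i k l
  · exact hkl
  · rw [h.diag_add_two, hkl, neg_zero]

theorem diag_diag_eq_zero (h : IsRelationArray P) (a i j : Fin 3) : P a i i j j = 0 := by
  refine h.diag_eq_zero_of_add_one ?_ i
  rw [h.antisymm, neg_eq_zero]
  refine h.diag_eq_zero_of_add_one ?_ j
  linear_combination h.antisymm a (a + 1) (a + 1) (a + 1) (a + 1) / 2

theorem diag_self_left_eq_zero (h : IsRelationArray P) (a i j : Fin 3) : P a i i a j = 0 := by
  rw [h.antisymm, h.self_left_eq_diag, h.diag_diag_eq_zero, zero_div, neg_zero, neg_zero]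

theorem diag_shift (h : IsRelationArray P) (a : Fin 3) :
    P (a + 1) (a + 2) (a + 2) (a + 2) a = P a (a + 1) (a + 1) (a + 1) (a + 2) := by
  have hfirst : P a (a + 1) (a + 2) (a + 2) (a + 2) = P a (a + 1) (a + 1) (a + 1) (a + 2) := by
    rw [h.antisymm, h.diag_add_two, neg_neg]
  have hsecond : P (a + 1) (a + 2) a (a + 2) (a + 2) = -P (a + 1) (a + 2) (a + 2) (a + 2) a :=
    h.antisymm _ _ _ _ _
  have hthird : P (a + 2) a (a + 1) (a + 2) (a + 2) = 0 := by
    rw [h.antisymm, h.self_self_eq_zero, neg_zero]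
  linear_combination hfirst + hsecond + hthird - h.cyclic a (a + 1) (a + 2) (a + 2) (a + 2)

theorem diag_eq_zero (h : IsRelationArray P) (h0 : P 0 1 1 1 2 = 0) (a i k l : Fin 3) :
    P a i i k l = 0 := by
  have h1 : P 1 2 2 2 0 = 0 := (h.diag_shift 0).trans h0
  have h2 : P 2 0 0 0 1 = 0 := (h.diag_shift 1).trans h1
  have hall (a : Fin 3) : P a (a + 1) (a + 1) (a + 1) (a + 2) = 0 := by
    fin_cases a
    exacts [h0, h1, h2]
  refine h.diag_eq_zero_of_add_one ?_ i
  exact fin_three_pair_induction (Q := fun k l => P a (a + 1) (a + 1) k l = 0)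
    (fun k l hkl => (h.symm_right ..).trans hkl) (h.diag_diag_eq_zero a (a + 1)) a
    (h.diag_self_left_eq_zero a (a + 1)) (hall a) k l

theorem eq_zero (h : IsRelationArray P) (h0 : P 0 1 1 1 2 = 0) (a i j k l : Fin 3) :
    P a i j k l = 0 := by
  have hself (j k l : Fin 3) : P a a j k l = 0 := by
    rw [h.self_left_eq_diag, h.diag_eq_zero h0, zero_div, neg_zero]
  have hreduce (k l : Fin 3) (hkl : P a (a + 1) (a + 2) k l = 0) (i j : Fin 3) :
      P a i j k l = 0 :=
    fin_three_pair_induction (Q := fun i j => P a i j k l = 0)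
      (fun i j hij => (h.symm ..).trans hij) (fun i => h.diag_eq_zero h0 a i k l) a
      (fun j => hself j k l) hkl i j
  refine hreduce k l ?_ i j
  rw [h.antisymm, neg_eq_zero]
  refine hreduce (a + 1) (a + 2) ?_ k l
  linear_combination h.antisymm a (a + 1) (a + 2) (a + 1) (a + 2) / 2

end IsRelationArray

end Arrays

section Example

theorem isRelationArray_coeff {ι : Type*} [Fintype ι] [DecidableEq ι] (b : Basis ι ℚ V)
    {μ : Dual ℚ (SqM V)}
    (hμ : ∀ i j, μ (sqm V (b i) (b j)) = if i = j then 1 else 0)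
    {m : V ⊗[ℚ] AltM (SqM V) →ₗ[ℚ] CubM V ⊗[ℚ] SqM V} (hm : IsRelationMap m)
    {w : V ⊗[ℚ] AltM (SqM V)} (hw : w ∈ tensorWedge V (LinearMap.ker μ) ⊓ LinearMap.ker m) :
    IsRelationArray fun a i j k l => coeff b a i j k l w where
  symm a i j k l := by rw [coeff, coeff, sqForm_comm]
  antisymm a i j k l := by
    rw [coeff, wdgForm_swap, TensorProduct.tmul_neg, map_neg, LinearMap.neg_apply, coeff]
  trace a k l := by
    refine sum_dualDistrib_wdgForm_eq_zero (fun u hu => ?_) _ _ hw.1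
    rw [← two_mul_eq_sum_sqForm b hμ, LinearMap.mem_ker.1 hu, mul_zero]
  cyclic a i j k l := by
    have hmw : m w = 0 := hw.2
    simpa [hmw, coeff] using (hm.dualDistrib_cubForm_map (b.coord a) (b.coord i) (b.coord j)
      (sqForm (b.coord k) (b.coord l)) w).symm

theorem coeff_cyclicElement (b : Basis (Fin 3) ℚ V) :
    coeff b 0 1 1 1 2 (cyclicElement (b 0) (b 1) (b 2)) = -2 := by
  have hcoord (i j : Fin 3) : b.coord i (b j) = if j = i then 1 else 0 := by
    rw [Basis.coord_apply, Basis.repr_self_apply]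
  simp +decide only [coeff, cyclicElement, TensorProduct.tmul_sub, map_add, map_sub,
    dualDistrib_apply, wdgForm_wdg, sqForm_sqm, hcoord, if_true, if_false]
  norm_num

theorem example_2_7_general (b : Basis (Fin 3) ℚ V) (μ : SqM V →ₗ[ℚ] ℚ)
    (hself : ∀ i, μ (sqm V (b i) (b i)) = 1) (hnext : ∀ i, μ (sqm V (b i) (b (i + 1))) = 0)
    (m : V ⊗[ℚ] AltM (SqM V) →ₗ[ℚ] CubM V ⊗[ℚ] SqM V) (hm : IsRelationMap m) :
    cyclicElement (b 0) (b 1) (b 2) ≠ 0 ∧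
      tensorWedge V (LinearMap.ker μ) ⊓ LinearMap.ker m
        = Submodule.span ℚ {cyclicElement (b 0) (b 1) (b 2)} := by
  have hμ (i j : Fin 3) : μ (sqm V (b i) (b j)) = if i = j then 1 else 0 := by
    rcases fin_three_cases i j with rfl | rfl | rfl
    · simp [hself]
    · simp [hnext]
    · rw [sqm_comm_s5]
      simpa [add_assoc] using hnext (i + 2)
  have hcoeff : coeff b 0 1 1 1 2 (cyclicElement (b 0) (b 1) (b 2)) ≠ 0 := by
    rw [coeff_cyclicElement]
    norm_num
  refine ⟨fun h => hcoeff (by rw [h, map_zero]), eq_span_singleton_of_dual ?_ ⟨?_, ?_⟩ hcoeff⟩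
  · exact fun w hw h0 =>
      eq_zero_of_coeff_eq_zero b ((isRelationArray_coeff b hμ hm hw).eq_zero h0)
  · apply cyclicElement_mem_tensorWedge <;> simp [hμ]
  · exact hm.map_cyclicElement _ _ _

end Example

/-- **Example 2.7.** Let `V = ℚ³` with basis `x, y, z` and let `μ : P²V → ℚ` be the
quadratic form with `μ(x²) = μ(y²) = μ(z²) = 1` and `μ(xy) = μ(yz) = μ(zx) = 0`.
With `E = ker μ` and `D = (V ⊗ Λ²E) ∩ R(V)`, the space `D` is one-dimensional, spanned
by the nonzero element `Σ_cyc x ⊗ (yz ∧ (y² − z²) − xy ∧ xz)`. -/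
theorem example_2_7
    (x y z : Fin 3 → ℚ)
    (hx : x = Pi.single 0 1) (hy : y = Pi.single 1 1) (hz : z = Pi.single 2 1)
    (μ : SqM (Fin 3 → ℚ) →ₗ[ℚ] ℚ)
    (hxx : μ (sqm (Fin 3 → ℚ) x x) = 1) (hyy : μ (sqm (Fin 3 → ℚ) y y) = 1)
    (hzz : μ (sqm (Fin 3 → ℚ) z z) = 1)
    (hxy : μ (sqm (Fin 3 → ℚ) x y) = 0) (hyz : μ (sqm (Fin 3 → ℚ) y z) = 0)
    (hzx : μ (sqm (Fin 3 → ℚ) z x) = 0)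
    (m : ((Fin 3 → ℚ) ⊗[ℚ] AltM (SqM (Fin 3 → ℚ)))
        →ₗ[ℚ] (CubM (Fin 3 → ℚ) ⊗[ℚ] SqM (Fin 3 → ℚ)))
    (hm : ∀ (q : Fin 3 → ℚ) (u v : SqM (Fin 3 → ℚ)),
      m (q ⊗ₜ[ℚ] wdg (SqM (Fin 3 → ℚ)) u v)
        = mulC (Fin 3 → ℚ) q u ⊗ₜ[ℚ] v - mulC (Fin 3 → ℚ) q v ⊗ₜ[ℚ] u)
    (gen : (Fin 3 → ℚ) ⊗[ℚ] AltM (SqM (Fin 3 → ℚ)))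
    (hgen : gen =
        x ⊗ₜ[ℚ] (wdg (SqM (Fin 3 → ℚ)) (sqm (Fin 3 → ℚ) y z)
            (sqm (Fin 3 → ℚ) y y - sqm (Fin 3 → ℚ) z z)
          - wdg (SqM (Fin 3 → ℚ)) (sqm (Fin 3 → ℚ) x y) (sqm (Fin 3 → ℚ) x z))
      + y ⊗ₜ[ℚ] (wdg (SqM (Fin 3 → ℚ)) (sqm (Fin 3 → ℚ) z x)
            (sqm (Fin 3 → ℚ) z z - sqm (Fin 3 → ℚ) x x)
          - wdg (SqM (Fin 3 → ℚ)) (sqm (Fin 3 → ℚ) y z) (sqm (Fin 3 → ℚ) y x))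
      + z ⊗ₜ[ℚ] (wdg (SqM (Fin 3 → ℚ)) (sqm (Fin 3 → ℚ) x y)
            (sqm (Fin 3 → ℚ) x x - sqm (Fin 3 → ℚ) y y)
          - wdg (SqM (Fin 3 → ℚ)) (sqm (Fin 3 → ℚ) z x) (sqm (Fin 3 → ℚ) z y))) :
    gen ≠ 0 ∧
      (Submodule.span ℚ {w : (Fin 3 → ℚ) ⊗[ℚ] AltM (SqM (Fin 3 → ℚ)) |
          ∃ (q : Fin 3 → ℚ) (u v : SqM (Fin 3 → ℚ)),
            u ∈ LinearMap.ker μ ∧ v ∈ LinearMap.ker μ ∧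
              w = q ⊗ₜ[ℚ] wdg (SqM (Fin 3 → ℚ)) u v})
          ⊓ LinearMap.ker m
        = Submodule.span ℚ {gen} := by
  subst hx hy hz hgen
  simpa only [Pi.basisFun_apply, cyclicElement, tensorWedge] using
    example_2_7_general (Pi.basisFun ℚ (Fin 3)) μ (by simp [Fin.forall_fin_succ, *])
      (by simp [Fin.forall_fin_succ, *]) m hm

end
end

section
/- Let A be a DGA over ℚ with H³ = 0. Then the linear map 𝒫 : D → H⁸ induced by the restriction of αγ² to D (which takes closed values) is independent of the cochain choice: for any two cochain choices (α, γ) and (α′, γ′), the classes [α(q)γ(e)γ(f) + …] and [α′(q)γ′(e)γ′(f) + …] in H⁸ agree on every element of D. -/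
/-!
Common constructions: for a `ℚ`-vector space `V`, the symmetric powers
`P²V, P³V, P⁴V, P⁵V` (as `SqM V`, `CubM V`, `QuarM V`, `QuinM V`), built as iterated
quotients of tensor products, with the multiplication maps between them; the exterior
square `Λ²W` (as `AltM W`) with the wedge map; and the 5-linear map `⋆` (as `star5`).
-/

open TensorProduct

noncomputable section

variable (V W : Type) [AddCommGroup V] [Module ℚ V] [AddCommGroup W] [Module ℚ W]

/-- A differential graded algebra (DGA) over `ℚ`: an `ℕ`-graded, graded-commutative,
associative unital `ℚ`-algebra with a degree `+1` differential satisfying `d ∘ d = 0`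
and the graded Leibniz rule. -/
structure DGA where
  /-- The underlying type. -/
  carrier : Type
  [ringStr : Ring carrier]
  [algStr : Algebra ℚ carrier]
  /-- The grading `A = ⊕ᵢ Aⁱ`. -/
  grading : ℕ → Submodule ℚ carrier
  one_mem : (1 : carrier) ∈ grading 0
  mul_mem : ∀ {i j : ℕ} {a b : carrier}, a ∈ grading i → b ∈ grading j → a * b ∈ grading (i + j)
  /-- The grading really is a direct sum decomposition. -/
  internal : DirectSum.IsInternal grading
  /-- Graded commutativity. -/
  gcomm : ∀ {i j : ℕ} {a b : carrier}, a ∈ grading i → b ∈ grading j →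
    a * b = ((-1 : ℚ) ^ (i * j)) • (b * a)
  /-- The differential. -/
  d : carrier →ₗ[ℚ] carrier
  d_mem : ∀ {i : ℕ} {a : carrier}, a ∈ grading i → d a ∈ grading (i + 1)
  d_d : ∀ a : carrier, d (d a) = 0
  /-- The graded Leibniz rule. -/
  leibniz : ∀ {i : ℕ} {a : carrier} (b : carrier), a ∈ grading i →
    d (a * b) = d a * b + ((-1 : ℚ) ^ i) • (a * d b)

attribute [instance] DGA.ringStr DGA.algStr

namespace DGA

variable (A : DGA)

/-- The closed elements of degree `i`. -/
def Z (i : ℕ) : Submodule ℚ A.carrier := A.grading i ⊓ LinearMap.ker A.d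

/-- The exact elements of degree `i`, as a submodule of the closed ones. -/
def Bdry (i : ℕ) : Submodule ℚ (A.Z i) :=
  Submodule.comap (A.Z i).subtype (Submodule.map A.d (A.grading (i - 1)))

/-- Degree `i` cohomology of the DGA. -/
abbrev H (i : ℕ) : Type := A.Z i ⧸ A.Bdry i

/-- The projection from closed elements to cohomology classes. -/
def pr (i : ℕ) : A.Z i →ₗ[ℚ] A.H i := (A.Bdry i).mkQ

end DGA

/-!
Since `H³ = 0`, any two cochain choices are joined by a polynomial path
`a + τ db`, `g + τ (ba + dε) + ½ τ² b db` of cochain choices, with `b` of degree `1` and `ε` of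
degree `2`. The derivative of `a g²` along such a path is the differential of `b g² + a (ε ∧ g)`
plus terms that factor through `m : V ⊗ Λ²(P²V) → P³V ⊗ P²V`, because the polynomials `b a²` and
`a³` are symmetric; these terms vanish on `D`. Integrating over `τ ∈ [0, 1]`, the two values on an
element of `D` differ by an exact cochain.
-/

section TensorMul

variable {K M N R : Type*} [CommSemiring K] [AddCommMonoid M] [AddCommMonoid N] [Module K M]
  [Module K N] [Semiring R] [Algebra K R]

/-- The product `f · g : M ⊗ N → R`, `x ⊗ y ↦ f x * g y`, of two linear maps into an algebra. -/
def tensorMul : (M →ₗ[K] R) →ₗ[K] (N →ₗ[K] R) →ₗ[K] M ⊗[K] N →ₗ[K] R :=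
  (TensorProduct.mapBilinear (.id K) M N R R).compr₂ (LinearMap.llcomp K _ _ _ (LinearMap.mul' K R))

@[simp]
theorem tensorMul_tmul (f : M →ₗ[K] R) (g : N →ₗ[K] R) (x : M) (y : N) :
    tensorMul f g (x ⊗ₜ[K] y) = f x * g y := rfl

end TensorMul

section SymmetricPowers

variable {V W} {R : Type} [Ring R] [Algebra ℚ R]

/-- The embedding `P²V → V ⊗ V`, `xy ↦ x ⊗ y + y ⊗ x`. -/
def symmetrize : SqM V →ₗ[ℚ] V ⊗[ℚ] V :=
  (sqRel V).liftQ (LinearMap.id + (TensorProduct.comm ℚ V V).toLinearMap) <| by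
    refine Submodule.span_le.2 ?_
    rintro _ ⟨x, y, rfl⟩
    simp

@[simp]
theorem symmetrize_sqm (x y : V) : symmetrize (sqm V x y) = x ⊗ₜ[ℚ] y + y ⊗ₜ[ℚ] x := rfl

/-- The embedding `Λ²W → W ⊗ W`, `e ∧ f ↦ e ⊗ f - f ⊗ e`. -/
def antisymmetrize : AltM W →ₗ[ℚ] W ⊗[ℚ] W :=
  (altRel2 W).liftQ (LinearMap.id - (TensorProduct.comm ℚ W W).toLinearMap) <| by
    refine Submodule.span_le.2 ?_
    rintro _ ⟨x, rfl⟩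
    simp

@[simp]
theorem antisymmetrize_wdg (e f : W) :
    antisymmetrize (wdg W e f) = e ⊗ₜ[ℚ] f - f ⊗ₜ[ℚ] e := rfl

/-- The symmetrized product `P²V → R`, `xy ↦ f x * g y + f y * g x`. -/
def symMul : (V →ₗ[ℚ] R) →ₗ[ℚ] (V →ₗ[ℚ] R) →ₗ[ℚ] SqM V →ₗ[ℚ] R :=
  tensorMul.compr₂ (LinearMap.lcomp ℚ R symmetrize)

@[simp]
theorem symMul_sqm (f g : V →ₗ[ℚ] R) (x y : V) :
    symMul f g (sqm V x y) = f x * g y + f y * g x := by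
  simp [symMul]

/-- The alternating product `Λ²W → R`, `e ∧ f ↦ y e * z f - y f * z e`. -/
def wedgeMul : (W →ₗ[ℚ] R) →ₗ[ℚ] (W →ₗ[ℚ] R) →ₗ[ℚ] AltM W →ₗ[ℚ] R :=
  tensorMul.compr₂ (LinearMap.lcomp ℚ R antisymmetrize)

@[simp]
theorem wedgeMul_wdg (y z : W →ₗ[ℚ] R) (e f : W) :
    wedgeMul y z (wdg W e f) = y e * z f - y f * z e := by
  simp [wedgeMul]

theorem sqm_hom_ext {C : Type*} [AddCommGroup C] [Module ℚ C] {F G : SqM V →ₗ[ℚ] C}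
    (h : ∀ x y, F (sqm V x y) = G (sqm V x y)) : F = G :=
  Submodule.linearMap_qext _ (TensorProduct.ext' h)

theorem wdg_hom_ext {C : Type*} [AddCommGroup C] [Module ℚ C] {F G : AltM W →ₗ[ℚ] C}
    (h : ∀ e f, F (wdg W e f) = G (wdg W e f)) : F = G :=
  Submodule.linearMap_qext _ (TensorProduct.ext' h)

theorem tmul_wdg_hom_ext {C : Type*} [AddCommGroup C] [Module ℚ C]
    {F G : V ⊗[ℚ] AltM W →ₗ[ℚ] C}
    (h : ∀ q e f, F (q ⊗ₜ[ℚ] wdg W e f) = G (q ⊗ₜ[ℚ] wdg W e f)) : F = G :=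
  TensorProduct.ext <| LinearMap.ext fun q => wdg_hom_ext (h q)

theorem exists_cubM_lift {C : Type*} [AddCommGroup C] [Module ℚ C]
    (B : V →ₗ[ℚ] SqM V →ₗ[ℚ] C) (hB : ∀ x y w, B x (sqm V y w) = B y (sqm V x w)) :
    ∃ F : CubM V →ₗ[ℚ] C, ∀ x u, F (mulC V x u) = B x u := by
  have relations_le : cubRel V ≤ LinearMap.ker (TensorProduct.lift B) := by
    refine Submodule.span_le.2 ?_
    rintro _ ⟨x, y, w, rfl⟩
    simp [hB x y]
  exact ⟨(cubRel V).liftQ (TensorProduct.lift B) relations_le, fun _ _ => rfl⟩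

-- The map obtained on `P³V` is the polarization of the cubic form `b a²`.
theorem exists_cubM_mul {a b : V →ₗ[ℚ] R} (haa : ∀ x y, Commute (a x) (a y))
    (hab : ∀ x y, Commute (a x) (b y)) :
    ∃ N : CubM V →ₗ[ℚ] R, ∀ q u,
      N (mulC V q u) = b q * symMul a a u + (2 : ℚ) • (a q * symMul b a u) := by
  refine exists_cubM_lift ((LinearMap.mul ℚ R).compl₁₂ b (symMul a a) +
    (2 : ℚ) • (LinearMap.mul ℚ R).compl₁₂ a (symMul b a)) fun x y w => ?_
  simp only [LinearMap.add_apply, LinearMap.smul_apply, LinearMap.compl₁₂_apply,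
    LinearMap.mul_apply', symMul_sqm, mul_add, ← mul_assoc, (hab x y).eq, (hab x w).eq,
    (hab y x).eq, (hab y w).eq]
  simp only [mul_assoc, (haa w x).eq, (haa w y).eq, (haa y x).eq]
  module

/-- The map `q ⊗ (e ∧ f) ↦ qe ⊗ f - qf ⊗ e` on `V ⊗ Λ²E`, whose kernel is the space `D` on
which the pentagonal Massey tensor is defined. -/
def mulSkew (E : Submodule ℚ (SqM V)) : V ⊗[ℚ] AltM E →ₗ[ℚ] CubM V ⊗[ℚ] SqM V :=
  TensorProduct.map (TensorProduct.lift (mulC V)) LinearMap.id ∘ₗ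
    (TensorProduct.assoc ℚ V (SqM V) (SqM V)).symm.toLinearMap ∘ₗ
      LinearMap.lTensor V (TensorProduct.map E.subtype E.subtype ∘ₗ antisymmetrize)

@[simp]
theorem mulSkew_tmul_wdg (E : Submodule ℚ (SqM V)) (q : V) (e f : E) :
    mulSkew E (q ⊗ₜ[ℚ] wdg E e f) =
      mulC V q e ⊗ₜ[ℚ] (f : SqM V) - mulC V q f ⊗ₜ[ℚ] (e : SqM V) := by
  simp [mulSkew, TensorProduct.tmul_sub]

theorem comp_eq_mulSkew {E : Submodule ℚ (SqM V)}
    {m : V ⊗[ℚ] AltM (SqM V) →ₗ[ℚ] CubM V ⊗[ℚ] SqM V}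
    (hm : ∀ q u v, m (q ⊗ₜ[ℚ] wdg (SqM V) u v) =
      mulC V q u ⊗ₜ[ℚ] v - mulC V q v ⊗ₜ[ℚ] u)
    {ι : V ⊗[ℚ] AltM E →ₗ[ℚ] V ⊗[ℚ] AltM (SqM V)}
    (hι : ∀ q (e f : E), ι (q ⊗ₜ[ℚ] wdg E e f) = q ⊗ₜ[ℚ] wdg (SqM V) (e : SqM V) (f : SqM V)) :
    m ∘ₗ ι = mulSkew E :=
  tmul_wdg_hom_ext fun q e f => by
    rw [LinearMap.comp_apply, hι, hm, mulSkew_tmul_wdg]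

theorem tensorMul_wedgeMul_symMul_eq_zero {E : Submodule ℚ (SqM V)} {a b : V →ₗ[ℚ] R}
    (haa : ∀ x y, Commute (a x) (a y)) (hab : ∀ x y, Commute (a x) (b y)) (z : E →ₗ[ℚ] R)
    {t : V ⊗[ℚ] AltM E} (ht : t ∈ LinearMap.ker (mulSkew E)) :
    tensorMul b (wedgeMul (symMul a a ∘ₗ E.subtype) z) t +
      (2 : ℚ) • tensorMul a (wedgeMul (symMul b a ∘ₗ E.subtype) z) t = 0 := by
  obtain ⟨N, hN⟩ := exists_cubM_mul haa hab
  obtain ⟨z', hz'⟩ := LinearMap.exists_extend z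
  have z'_coe (e : E) : z' e = z e := LinearMap.congr_fun hz' e
  have factors : tensorMul b (wedgeMul (symMul a a ∘ₗ E.subtype) z) +
      (2 : ℚ) • tensorMul a (wedgeMul (symMul b a ∘ₗ E.subtype) z) =
        tensorMul N z' ∘ₗ mulSkew E := by
    refine tmul_wdg_hom_ext fun q e f => ?_
    simp only [LinearMap.add_apply, LinearMap.smul_apply, LinearMap.comp_apply, tensorMul_tmul,
      wedgeMul_wdg, mulSkew_tmul_wdg, map_sub, hN, z'_coe, Submodule.subtype_apply, mul_sub,
      add_mul, smul_mul_assoc, mul_assoc]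
    module
  simpa [LinearMap.mem_ker.1 ht] using LinearMap.congr_fun factors t

end SymmetricPowers

section LinearAlgebra

theorem exists_linearMap_comp_eq {K M N P : Type*} [Ring K] [AddCommGroup M] [AddCommGroup N]
    [AddCommGroup P] [Module K M] [Module K N] [Module K P] [Module.Projective K M]
    (d : N →ₗ[K] P) (G : Submodule K N) (f : M →ₗ[K] P) (hf : ∀ x, f x ∈ G.map d) :
    ∃ b : M →ₗ[K] N, (∀ x, b x ∈ G) ∧ d ∘ₗ b = f := by
  obtain ⟨b, hb⟩ := Module.projective_lifting_property (d.submoduleMap G)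
    (f.codRestrict (G.map d) hf) (d.submoduleMap_surjective G)
  exact ⟨G.subtype ∘ₗ b, fun x => (b x).2,
    LinearMap.ext fun x => congrArg Subtype.val (LinearMap.congr_fun hb x)⟩

theorem bilinear_sub_mem_of_deriv_mem {X Y Z M : Type*} [AddCommGroup X] [AddCommGroup Y]
    [AddCommGroup Z] [AddCommGroup M] [Module ℚ X] [Module ℚ Y] [Module ℚ Z] [Module ℚ M]
    (T : X →ₗ[ℚ] Z →ₗ[ℚ] M) (B : Y →ₗ[ℚ] Y →ₗ[ℚ] Z) (S : Submodule ℚ M) (a δ : X) (g k h : Y)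
    (hS : ∀ τ : ℚ,
      T δ (B (g + τ • k + τ ^ 2 • h) (g + τ • k + τ ^ 2 • h)) +
        T (a + τ • δ) (B (k + (2 * τ) • h) (g + τ • k + τ ^ 2 • h) +
          B (g + τ • k + τ ^ 2 • h) (k + (2 * τ) • h)) ∈ S) :
    T (a + δ) (B (g + k + h) (g + k + h)) - T a (B g g) ∈ S := by
  -- Boole's rule on `[0, 1]`, exact because the derivative has degree `4` in `τ`.
  have weighted (w τ : ℚ) := S.smul_mem w (hS τ)
  convert S.add_mem (S.add_mem (S.add_mem (S.add_mem (weighted (7 / 90) 0)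
    (weighted (32 / 90) (1 / 4))) (weighted (12 / 90) (1 / 2))) (weighted (32 / 90) (3 / 4)))
    (weighted (7 / 90) 1) using 1
  simp only [map_add, map_smul, LinearMap.add_apply, LinearMap.smul_apply]
  module

end LinearAlgebra

namespace DGA

variable {A : DGA}

section GradedHom

variable {M N : Type*} [AddCommGroup M] [AddCommGroup N] [Module ℚ M] [Module ℚ N]
  {i j : ℕ} {f : M →ₗ[ℚ] A.carrier} {g : N →ₗ[ℚ] A.carrier}

variable (A M) in
/-- The linear maps `M → A` with values in degree `i`. -/
def gradedHom (i : ℕ) : Submodule ℚ (M →ₗ[ℚ] A.carrier) where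
  carrier := {f | ∀ x, f x ∈ A.grading i}
  add_mem' hf hg x := add_mem (hf x) (hg x)
  zero_mem' _ := zero_mem _
  smul_mem' c _ hf x := (A.grading i).smul_mem c (hf x)

theorem comp_mem_gradedHom (hf : f ∈ A.gradedHom M i) (p : N →ₗ[ℚ] M) :
    f ∘ₗ p ∈ A.gradedHom N i := fun x => hf (p x)

theorem d_comp_mem_gradedHom (hf : f ∈ A.gradedHom M i) : A.d ∘ₗ f ∈ A.gradedHom M (i + 1) :=
  fun x => A.d_mem (hf x)

@[simp]
theorem d_comp_d_comp (f : M →ₗ[ℚ] A.carrier) : A.d ∘ₗ A.d ∘ₗ f = 0 :=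
  LinearMap.ext fun x => A.d_d (f x)

theorem commute_of_even {a b : A.carrier} (ha : a ∈ A.grading i) (hb : b ∈ A.grading j)
    (h : Even (i * j)) : Commute a b := by
  rw [Commute, SemiconjBy, A.gcomm ha hb, h.neg_one_pow, one_smul]

theorem mul_eq_neg_mul_of_odd {a b : A.carrier} (ha : a ∈ A.grading i) (hb : b ∈ A.grading j)
    (h : Odd (i * j)) : a * b = -(b * a) := by
  rw [A.gcomm ha hb, h.neg_one_pow, neg_one_smul]

theorem tensorMul_mem_gradedHom (hf : f ∈ A.gradedHom M i) (hg : g ∈ A.gradedHom N j) :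
    tensorMul f g ∈ A.gradedHom (M ⊗[ℚ] N) (i + j) := by
  intro t
  induction t with
  | zero => simp
  | tmul x y => exact A.mul_mem (hf x) (hg y)
  | add s t hs ht => simpa only [map_add] using add_mem hs ht

theorem d_comp_tensorMul (hf : f ∈ A.gradedHom M i) (g : N →ₗ[ℚ] A.carrier) :
    A.d ∘ₗ tensorMul f g = tensorMul (A.d ∘ₗ f) g + (-1 : ℚ) ^ i • tensorMul f (A.d ∘ₗ g) :=
  TensorProduct.ext' fun x y => by simp [A.leibniz (g y) (hf x)]

end GradedHom

section Products

variable {V W} {i j : ℕ} {f g : V →ₗ[ℚ] A.carrier} {y z : W →ₗ[ℚ] A.carrier}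

theorem symMul_mem_gradedHom (hf : f ∈ A.gradedHom V i) (hg : g ∈ A.gradedHom V j) :
    symMul f g ∈ A.gradedHom (SqM V) (i + j) :=
  comp_mem_gradedHom (tensorMul_mem_gradedHom hf hg) symmetrize

theorem wedgeMul_mem_gradedHom (hy : y ∈ A.gradedHom W i) (hz : z ∈ A.gradedHom W j) :
    wedgeMul y z ∈ A.gradedHom (AltM W) (i + j) :=
  comp_mem_gradedHom (tensorMul_mem_gradedHom hy hz) antisymmetrize

theorem d_comp_symMul (hf : f ∈ A.gradedHom V i) (g : V →ₗ[ℚ] A.carrier) :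
    A.d ∘ₗ symMul f g = symMul (A.d ∘ₗ f) g + (-1 : ℚ) ^ i • symMul f (A.d ∘ₗ g) :=
  congrArg (· ∘ₗ symmetrize) (d_comp_tensorMul hf g)

theorem d_comp_wedgeMul (hy : y ∈ A.gradedHom W i) (z : W →ₗ[ℚ] A.carrier) :
    A.d ∘ₗ wedgeMul y z = wedgeMul (A.d ∘ₗ y) z + (-1 : ℚ) ^ i • wedgeMul y (A.d ∘ₗ z) :=
  congrArg (· ∘ₗ antisymmetrize) (d_comp_tensorMul hy z)

theorem symMul_comm_of_even (hf : f ∈ A.gradedHom V i) (hg : g ∈ A.gradedHom V j)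
    (h : Even (i * j)) : symMul f g = symMul g f :=
  sqm_hom_ext fun x y => by
    simp only [symMul_sqm, (commute_of_even (hf _) (hg _) h).eq, add_comm]

theorem wedgeMul_anticomm_of_even (hy : y ∈ A.gradedHom W i) (hz : z ∈ A.gradedHom W j)
    (h : Even (i * j)) : wedgeMul y z = -wedgeMul z y :=
  wdg_hom_ext fun e f => by
    simp only [wedgeMul_wdg, LinearMap.neg_apply, (commute_of_even (hy _) (hz _) h).eq, neg_sub]

theorem wedgeMul_comm_of_odd (hy : y ∈ A.gradedHom W i) (hz : z ∈ A.gradedHom W j)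
    (h : Odd (i * j)) : wedgeMul y z = wedgeMul z y :=
  wdg_hom_ext fun e f => by
    simp only [wedgeMul_wdg, mul_eq_neg_mul_of_odd (hy _) (hz _) h, sub_neg_eq_add, neg_add_eq_sub]

end Products

theorem mul_mem_Z {i j : ℕ} {z w : A.carrier} (hz : z ∈ A.Z i) (hw : w ∈ A.Z j) :
    z * w ∈ A.Z (i + j) :=
  ⟨A.mul_mem hz.1 hw.1, LinearMap.mem_ker.2 <| by
    simp [A.leibniz w hz.1, LinearMap.mem_ker.1 hz.2, LinearMap.mem_ker.1 hw.2]⟩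

theorem mem_map_d_of_H_eq_zero {i : ℕ} (hH : ∀ x : A.H i, x = 0) {z : A.carrier}
    (hz : z ∈ A.Z i) : z ∈ (A.grading (i - 1)).map A.d :=
  (Submodule.Quotient.mk_eq_zero (A.Bdry i)).1 (hH (A.pr i ⟨z, hz⟩))

theorem sub_mem_map_d_of_pr_eq {i : ℕ} {z w : A.Z i} (h : A.pr i z = A.pr i w) :
    (z - w : A.carrier) ∈ (A.grading (i - 1)).map A.d :=
  (Submodule.Quotient.eq (A.Bdry i)).1 h

variable {V}

variable (A) in
/-- A cochain choice over a subspace `E ⊆ P²V`: closed representatives `a` in degree `2` and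
cochains `g` in degree `3` with `d (g e) = a²(e)` for `e ∈ E`, the square `a²` being encoded as
half of `symMul a a`. The paper's notion is the case `V = H²`, `E = ker (P²H² → H⁴)`, with `a` a
right inverse of `Z² → H²`. -/
@[ext]
structure CochainChoice (E : Submodule ℚ (SqM V)) where
  /-- The degree `2` representatives. -/
  a : V →ₗ[ℚ] A.carrier
  /-- The degree `3` primitives of the squares. -/
  g : E →ₗ[ℚ] A.carrier
  a_mem : a ∈ A.gradedHom V 2
  g_mem : g ∈ A.gradedHom E 3
  d_a : A.d ∘ₗ a = 0
  d_g : A.d ∘ₗ g = (1 / 2 : ℚ) • symMul a a ∘ₗ E.subtype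

namespace CochainChoice

variable {E : Submodule ℚ (SqM V)} (X : A.CochainChoice E)

/-- The cochain map `q ⊗ (e ∧ f) ↦ a q * (g e * g f)`, which is the paper's `αγ²`. -/
def massey : V ⊗[ℚ] AltM E →ₗ[ℚ] A.carrier :=
  (1 / 2 : ℚ) • tensorMul X.a (wedgeMul X.g X.g)

theorem massey_tmul_wdg (q : V) (e f : E) :
    X.massey (q ⊗ₜ[ℚ] wdg E e f) = X.a q * (X.g e * X.g f) := by
  have anticomm : X.g f * X.g e = -(X.g e * X.g f) :=
    mul_eq_neg_mul_of_odd (X.g_mem f) (X.g_mem e) (by decide)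
  simp only [massey, LinearMap.smul_apply, tensorMul_tmul, wedgeMul_wdg, anticomm, mul_sub,
    mul_neg]
  module

variable {b : V →ₗ[ℚ] A.carrier} {ε : E →ₗ[ℚ] A.carrier}

/-- The cochain choice with representatives `a + d b` whose primitives are corrected accordingly
and then changed by `d ε`. -/
@[simps]
def deform (hb : b ∈ A.gradedHom V 1) (hε : ε ∈ A.gradedHom E 2) : A.CochainChoice E where
  a := X.a + A.d ∘ₗ b
  g := X.g + (symMul b X.a ∘ₗ E.subtype + A.d ∘ₗ ε) +
    (1 / 2 : ℚ) • symMul b (A.d ∘ₗ b) ∘ₗ E.subtype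
  a_mem := add_mem X.a_mem (d_comp_mem_gradedHom hb)
  g_mem := add_mem (add_mem X.g_mem
    (add_mem (comp_mem_gradedHom (symMul_mem_gradedHom hb X.a_mem) _) (d_comp_mem_gradedHom hε)))
    (Submodule.smul_mem _ _
      (comp_mem_gradedHom (symMul_mem_gradedHom hb (d_comp_mem_gradedHom hb)) _))
  d_a := by simp [LinearMap.comp_add, X.d_a]
  d_g := by
    have symMul_a_db : symMul X.a (A.d ∘ₗ b) = symMul (A.d ∘ₗ b) X.a :=
      symMul_comm_of_even X.a_mem (d_comp_mem_gradedHom hb) (by decide)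
    simp only [LinearMap.comp_add, LinearMap.comp_smul, ← LinearMap.comp_assoc,
      d_comp_symMul hb, X.d_a, X.d_g]
    simp only [LinearMap.comp_assoc, d_comp_d_comp, map_add, LinearMap.add_apply, symMul_a_db,
      map_zero, smul_zero, add_zero, LinearMap.add_comp]
    module

theorem d_comp_tensorMul_wedgeMul_g_g (hb : b ∈ A.gradedHom V 1) :
    A.d ∘ₗ tensorMul b (wedgeMul X.g X.g) =
      tensorMul (A.d ∘ₗ b) (wedgeMul X.g X.g) -
        tensorMul b (wedgeMul (symMul X.a X.a ∘ₗ E.subtype) X.g) := by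
  have g_sq : wedgeMul X.g (symMul X.a X.a ∘ₗ E.subtype) =
      -wedgeMul (symMul X.a X.a ∘ₗ E.subtype) X.g :=
    wedgeMul_anticomm_of_even X.g_mem
      (comp_mem_gradedHom (symMul_mem_gradedHom X.a_mem X.a_mem) E.subtype) (by decide)
  rw [d_comp_tensorMul hb, d_comp_wedgeMul X.g_mem, X.d_g]
  simp only [map_add, map_smul, LinearMap.smul_apply, g_sq, smul_neg, map_neg]
  module

theorem d_comp_tensorMul_a_wedgeMul_g (hε : ε ∈ A.gradedHom E 2) :
    A.d ∘ₗ tensorMul X.a (wedgeMul ε X.g) =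
      tensorMul X.a (wedgeMul (A.d ∘ₗ ε) X.g) -
        (1 / 2 : ℚ) • tensorMul X.a (wedgeMul (symMul X.a X.a ∘ₗ E.subtype) ε) := by
  have ε_sq : wedgeMul ε (symMul X.a X.a ∘ₗ E.subtype) =
      -wedgeMul (symMul X.a X.a ∘ₗ E.subtype) ε :=
    wedgeMul_anticomm_of_even hε
      (comp_mem_gradedHom (symMul_mem_gradedHom X.a_mem X.a_mem) E.subtype) (by decide)
  rw [d_comp_tensorMul X.a_mem, d_comp_wedgeMul hε, X.d_a, X.d_g]
  simp only [map_add, map_smul, LinearMap.zero_apply, map_zero, ε_sq, smul_neg, map_neg]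
  module

-- The left-hand side is twice the derivative of `massey` at `(a, g)` in the direction `(db, k)`.
theorem massey_deriv_eq_d (hb : b ∈ A.gradedHom V 1) (hε : ε ∈ A.gradedHom E 2)
    {t : V ⊗[ℚ] AltM E} (ht : t ∈ LinearMap.ker (mulSkew E)) {k : E →ₗ[ℚ] A.carrier}
    (hk : k = symMul b X.a ∘ₗ E.subtype + A.d ∘ₗ ε) :
    tensorMul (A.d ∘ₗ b) (wedgeMul X.g X.g) t +
        tensorMul X.a (wedgeMul k X.g + wedgeMul X.g k) t =
      A.d (tensorMul b (wedgeMul X.g X.g) t + (2 : ℚ) • tensorMul X.a (wedgeMul ε X.g) t) := by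
  have k_mem : k ∈ A.gradedHom E 3 := hk ▸ add_mem
    (comp_mem_gradedHom (symMul_mem_gradedHom hb X.a_mem) _) (d_comp_mem_gradedHom hε)
  have g_k : wedgeMul X.g k = wedgeMul k X.g :=
    wedgeMul_comm_of_odd X.g_mem k_mem (by decide)
  have commute_aa (x y) : Commute (X.a x) (X.a y) :=
    commute_of_even (X.a_mem x) (X.a_mem y) (by decide)
  have commute_ab (x y) : Commute (X.a x) (b y) :=
    commute_of_even (X.a_mem x) (hb y) (by decide)
  have vanish_b := tensorMul_wedgeMul_symMul_eq_zero commute_aa commute_ab X.g ht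
  have vanish_a := tensorMul_wedgeMul_symMul_eq_zero commute_aa commute_aa ε ht
  have d_bgg := LinearMap.congr_fun (X.d_comp_tensorMul_wedgeMul_g_g hb) t
  have d_aεg := LinearMap.congr_fun (X.d_comp_tensorMul_a_wedgeMul_g hε) t
  simp only [eq_sub_of_add_eq' hk.symm, map_sub, LinearMap.comp_apply,
    LinearMap.sub_apply, LinearMap.smul_apply] at d_bgg d_aεg
  simp only [map_add, map_smul, LinearMap.add_apply, d_bgg, d_aεg, g_k]
  linear_combination (norm := module) vanish_b + (1 / 3 : ℚ) • vanish_a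

theorem massey_deriv_mem (hb : b ∈ A.gradedHom V 1) (hε : ε ∈ A.gradedHom E 2)
    {t : V ⊗[ℚ] AltM E} (ht : t ∈ LinearMap.ker (mulSkew E)) {k : E →ₗ[ℚ] A.carrier}
    (hk : k = symMul b X.a ∘ₗ E.subtype + A.d ∘ₗ ε) :
    tensorMul (A.d ∘ₗ b) (wedgeMul X.g X.g) t +
      tensorMul X.a (wedgeMul k X.g + wedgeMul X.g k) t ∈ (A.grading 7).map A.d := by
  have bgg_mem : tensorMul b (wedgeMul X.g X.g) t ∈ A.grading 7 :=
    tensorMul_mem_gradedHom hb (wedgeMul_mem_gradedHom X.g_mem X.g_mem) t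
  have aεg_mem : tensorMul X.a (wedgeMul ε X.g) t ∈ A.grading 7 :=
    tensorMul_mem_gradedHom X.a_mem (wedgeMul_mem_gradedHom hε X.g_mem) t
  rw [X.massey_deriv_eq_d hb hε ht hk]
  exact Submodule.mem_map_of_mem (add_mem bgg_mem (Submodule.smul_mem _ 2 aεg_mem))

theorem massey_deform_sub_mem (hb : b ∈ A.gradedHom V 1) (hε : ε ∈ A.gradedHom E 2)
    {t : V ⊗[ℚ] AltM E} (ht : t ∈ LinearMap.ker (mulSkew E)) :
    (X.deform hb hε).massey t - X.massey t ∈ (A.grading 7).map A.d := by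
  simp only [massey, LinearMap.smul_apply, ← smul_sub]
  refine Submodule.smul_mem _ _ (bilinear_sub_mem_of_deriv_mem
    (tensorMul.compr₂ (LinearMap.applyₗ t)) wedgeMul _ X.a (A.d ∘ₗ b) X.g
      (symMul b X.a ∘ₗ E.subtype + A.d ∘ₗ ε)
      ((1 / 2 : ℚ) • symMul b (A.d ∘ₗ b) ∘ₗ E.subtype) fun τ => ?_)
  let Y := X.deform ((A.gradedHom V 1).smul_mem τ hb) ((A.gradedHom E 2).smul_mem τ hε)
  have a_path : Y.a = X.a + τ • A.d ∘ₗ b := by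
    simp only [Y, deform_a, LinearMap.comp_smul]
  have g_path : Y.g = X.g + τ • (symMul b X.a ∘ₗ E.subtype + A.d ∘ₗ ε) +
      τ ^ 2 • (1 / 2 : ℚ) • symMul b (A.d ∘ₗ b) ∘ₗ E.subtype := by
    simp only [Y, deform_g, LinearMap.comp_smul, map_smul, LinearMap.smul_apply,
      LinearMap.smul_comp]
    module
  have g_deriv : symMul b X.a ∘ₗ E.subtype + A.d ∘ₗ ε +
      (2 * τ) • (1 / 2 : ℚ) • symMul b (A.d ∘ₗ b) ∘ₗ E.subtype =
        symMul b Y.a ∘ₗ E.subtype + A.d ∘ₗ ε := by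
    simp only [a_path, map_add, map_smul, LinearMap.add_comp, LinearMap.smul_comp]
    module
  simpa only [a_path, g_path, LinearMap.compr₂_apply, LinearMap.applyₗ_apply_apply] using
    Y.massey_deriv_mem hb hε ht g_deriv

theorem exists_eq_deform (h3 : ∀ x : A.H 3, x = 0) (X Y : A.CochainChoice E)
    (h : ∀ x, Y.a x - X.a x ∈ (A.grading 1).map A.d) :
    ∃ (b : V →ₗ[ℚ] A.carrier) (hb : b ∈ A.gradedHom V 1) (ε : E →ₗ[ℚ] A.carrier)
      (hε : ε ∈ A.gradedHom E 2), Y = X.deform hb hε := by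
  obtain ⟨b, (hb : b ∈ A.gradedHom V 1), hdb⟩ :=
    exists_linearMap_comp_eq A.d (A.grading 1) (Y.a - X.a) h
  let X' := X.deform hb (zero_mem _)
  have a_eq : X'.a = Y.a := by simp [X', hdb]
  have closed : A.d ∘ₗ (Y.g - X'.g) = 0 := by
    rw [LinearMap.comp_sub, Y.d_g, X'.d_g, a_eq, sub_self]
  obtain ⟨ε, (hε : ε ∈ A.gradedHom E 2), hdε⟩ :=
    exists_linearMap_comp_eq A.d (A.grading 2) (Y.g - X'.g) fun e =>
      mem_map_d_of_H_eq_zero h3 ⟨sub_mem Y.g_mem X'.g_mem e, LinearMap.congr_fun closed e⟩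
  refine ⟨b, hb, ε, hε, CochainChoice.ext a_eq.symm ?_⟩
  simp only [deform_g, hdε, X', LinearMap.comp_zero, add_zero]
  abel

theorem eq_massey {Φ : V ⊗[ℚ] AltM E →ₗ[ℚ] A.carrier}
    (hΦ : ∀ q e f, Φ (q ⊗ₜ[ℚ] wdg E e f) = X.a q * (X.g e * X.g f)) : Φ = X.massey :=
  tmul_wdg_hom_ext fun q e f => (hΦ q e f).trans (X.massey_tmul_wdg q e f).symm

theorem subtype_comp_eq_half_symMul {α : V →ₗ[ℚ] A.Z 2} {αsq : SqM V →ₗ[ℚ] A.Z 4}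
    (hαsq : ∀ (x y : V) (w : A.Z 4), (w : A.carrier) = (α x : A.carrier) * (α y : A.carrier) →
      αsq (sqm V x y) = w) :
    (A.Z 4).subtype ∘ₗ αsq =
      (1 / 2 : ℚ) • symMul ((A.Z 2).subtype ∘ₗ α) ((A.Z 2).subtype ∘ₗ α) := by
  refine sqm_hom_ext fun x y => ?_
  have comm : (α y * α x : A.carrier) = α x * α y :=
    commute_of_even (α y).2.1 (α x).2.1 (by decide)
  have sq_xy := hαsq x y ⟨_, mul_mem_Z (α x).2 (α y).2⟩ rfl
  simp only [LinearMap.comp_apply, sq_xy, LinearMap.smul_apply, symMul_sqm,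
    Submodule.subtype_apply, comm]
  module

/-- The cochain choice given by `α : V → Z²` and `γ`, where `αsq : P²V → Z⁴` is the map induced by
the products of values of `α`. -/
def ofSq (α : V →ₗ[ℚ] A.Z 2) (αsq : SqM V →ₗ[ℚ] A.Z 4)
    (hαsq : ∀ (x y : V) (w : A.Z 4), (w : A.carrier) = (α x : A.carrier) * (α y : A.carrier) →
      αsq (sqm V x y) = w)
    (γ : E →ₗ[ℚ] A.carrier) (hγmem : ∀ e, γ e ∈ A.grading 3)
    (hγd : ∀ e : E, A.d (γ e) = (αsq e : A.carrier)) : A.CochainChoice E where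
  a := (A.Z 2).subtype ∘ₗ α
  g := γ
  a_mem x := (α x).2.1
  g_mem := hγmem
  d_a := LinearMap.ext fun x => (α x).2.2
  d_g := by
    rw [← LinearMap.smul_comp, ← subtype_comp_eq_half_symMul hαsq]
    exact LinearMap.ext hγd

end CochainChoice

end DGA

theorem P_well_defined_general {A : DGA} (h3 : ∀ x : A.H 3, x = 0) {V : Type} [AddCommGroup V]
    [Module ℚ V] {E : Submodule ℚ (SqM V)} (X Y : A.CochainChoice E)
    (h : ∀ x, X.a x - Y.a x ∈ (A.grading 1).map A.d) {t : V ⊗[ℚ] AltM E}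
    (ht : t ∈ LinearMap.ker (mulSkew E)) :
    X.massey t - Y.massey t ∈ (A.grading 7).map A.d := by
  obtain ⟨b, hb, ε, hε, rfl⟩ := DGA.CochainChoice.exists_eq_deform h3 Y X h
  exact Y.massey_deform_sub_mem hb hε ht

/-- **Theorem 2.5.** Let `A` be a DGA over `ℚ` with `H³ = 0`. Then the map
`𝒫 : D → H⁸` induced by the restriction of `αγ²` to `D` is independent of the cochain
choice `(α, γ)`: for any two cochain choices the values of the two maps `αγ²` on any
element of `D` differ by an exact element, hence define the same class in `H⁸`. -/
theorem P_well_defined (A : DGA) (h3 : ∀ x : A.H 3, x = 0)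
    (cup : SqM (A.H 2) →ₗ[ℚ] A.H 4)
    (hcup : ∀ (x y : A.Z 2) (w : A.Z 4),
      (w : A.carrier) = (x : A.carrier) * (y : A.carrier) →
      cup (sqm (A.H 2) (A.pr 2 x) (A.pr 2 y)) = A.pr 4 w)
    (m : (A.H 2 ⊗[ℚ] AltM (SqM (A.H 2))) →ₗ[ℚ] (CubM (A.H 2) ⊗[ℚ] SqM (A.H 2)))
    (hm : ∀ (q : A.H 2) (u v : SqM (A.H 2)),
      m (q ⊗ₜ[ℚ] wdg (SqM (A.H 2)) u v)
        = mulC (A.H 2) q u ⊗ₜ[ℚ] v - mulC (A.H 2) q v ⊗ₜ[ℚ] u)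
    (ι : (A.H 2 ⊗[ℚ] AltM ↥(LinearMap.ker cup)) →ₗ[ℚ] (A.H 2 ⊗[ℚ] AltM (SqM (A.H 2))))
    (hι : ∀ (q : A.H 2) (e e' : ↥(LinearMap.ker cup)),
      ι (q ⊗ₜ[ℚ] wdg ↥(LinearMap.ker cup) e e')
        = q ⊗ₜ[ℚ] wdg (SqM (A.H 2)) (e : SqM (A.H 2)) (e' : SqM (A.H 2)))
    -- first cochain choice `(α, γ)` and the associated map `Φ = αγ²`
    (α : A.H 2 →ₗ[ℚ] A.Z 2) (hα : ∀ h, A.pr 2 (α h) = h)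
    (αsq : SqM (A.H 2) →ₗ[ℚ] A.Z 4)
    (hαsq : ∀ (x y : A.H 2) (w : A.Z 4),
      (w : A.carrier) = (α x : A.carrier) * (α y : A.carrier) →
      αsq (sqm (A.H 2) x y) = w)
    (γ : ↥(LinearMap.ker cup) →ₗ[ℚ] A.carrier)
    (hγmem : ∀ e, γ e ∈ A.grading 3)
    (hγd : ∀ e : ↥(LinearMap.ker cup), A.d (γ e) = (αsq (e : SqM (A.H 2)) : A.carrier))
    (Φ : (A.H 2 ⊗[ℚ] AltM ↥(LinearMap.ker cup)) →ₗ[ℚ] A.carrier)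
    (hΦ : ∀ (q : A.H 2) (e e' : ↥(LinearMap.ker cup)),
      Φ (q ⊗ₜ[ℚ] wdg ↥(LinearMap.ker cup) e e') = (α q : A.carrier) * (γ e * γ e'))
    -- second cochain choice `(α', γ')` and the associated map `Φ' = α'γ'²`
    (α' : A.H 2 →ₗ[ℚ] A.Z 2) (hα' : ∀ h, A.pr 2 (α' h) = h)
    (αsq' : SqM (A.H 2) →ₗ[ℚ] A.Z 4)
    (hαsq' : ∀ (x y : A.H 2) (w : A.Z 4),
      (w : A.carrier) = (α' x : A.carrier) * (α' y : A.carrier) →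
      αsq' (sqm (A.H 2) x y) = w)
    (γ' : ↥(LinearMap.ker cup) →ₗ[ℚ] A.carrier)
    (hγmem' : ∀ e, γ' e ∈ A.grading 3)
    (hγd' : ∀ e : ↥(LinearMap.ker cup), A.d (γ' e) = (αsq' (e : SqM (A.H 2)) : A.carrier))
    (Φ' : (A.H 2 ⊗[ℚ] AltM ↥(LinearMap.ker cup)) →ₗ[ℚ] A.carrier)
    (hΦ' : ∀ (q : A.H 2) (e e' : ↥(LinearMap.ker cup)),
      Φ' (q ⊗ₜ[ℚ] wdg ↥(LinearMap.ker cup) e e') = (α' q : A.carrier) * (γ' e * γ' e')) :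
    ∀ t : A.H 2 ⊗[ℚ] AltM ↥(LinearMap.ker cup), m (ι t) = 0 →
      Φ t - Φ' t ∈ Submodule.map A.d (A.grading 7) := by
  intro t ht
  rw [(DGA.CochainChoice.ofSq α αsq hαsq γ hγmem hγd).eq_massey hΦ,
    (DGA.CochainChoice.ofSq α' αsq' hαsq' γ' hγmem' hγd').eq_massey hΦ']
  refine P_well_defined_general h3 _ _ (fun q => ?_) ?_
  · exact DGA.sub_mem_map_d_of_pr_eq ((hα q).trans (hα' q).symm)
  · rwa [← comp_eq_mulSkew hm hι]

end
end
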